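/- Every morphism of tiled surfaces f: Y → Z with Y boundary reduced is π_1-injective, i.e., the induced map on fundamental groups (of each component, at any basepoint) is injective. -/

import Mathlib

/-!
Formalization preamble for "Core Surfaces" (Magee–Puder).

We work with a fixed combinatorial (CW) model.  The surface `Σ_g` has one vertex,
`2g` directed labeled edges (the label `2i` plays the role of `a_{i+1}` and `2i+1`
the role of `b_{i+1}`), and one `4g`-gon glued along `[a₁,b₁]⋯[a_g,b_g]`.

* `Gamma g` is the surface group, presented by the single relator.
* A `Complex g` is a combinatorial 2-complex with directed, labeled edges and
  2-cells given by their boundary walks; coverings of `Σ_g` are the complexes in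
  which every vertex has exactly one incoming/outgoing edge of each label, every
  walk reading the relator is closed, and every closed walk reading the relator
  bounds exactly one face (`IsCovering`).  A tiled surface is a complex that
  embeds into such a covering (`IsTiledSurface`).
* Blocks, chains, boundary cycles (via the ribbon structure coming from the fixed
  cyclic order of the `4g` half-edges around a vertex of `Σ_g`), boundary-reduced
  and strongly boundary-reduced surfaces are defined combinatorially.
* Homotopy of edge-walks is the edge-path-group homotopy: backtrack insertions and
  insertions of boundaries of (present) faces.
* `cover g J` is the covering space `J\~Σ_g` of `Σ_g` associated to a subgroup
  `J ≤ Γ_g` (vertices = right cosets), and `coreSub g J` is the core surface of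
  `J`, defined exactly as in the paper: the union of all shortest representative
  cycles of essential free-homotopy classes, together with all components of the
  complement containing finitely many `4g`-gons.
-/

noncomputable section

namespace CS

/-- Signed letters over the generators `a₁,b₁,…,a_g,b_g` of `Γ_g`
(`a_{i+1} ↦ 2i`, `b_{i+1} ↦ 2i+1`); `true` means a positive letter. -/
abbrev Letter (g : ℕ) := Fin (2 * g) × Bool

/-- The label of the `p`-th letter of the relator `[a₁,b₁][a₂,b₂]⋯[a_g,b_g]`. -/
def relLabel (g : ℕ) (p : Fin (4 * g)) : Fin (2 * g) :=
  ⟨2 * ((p : ℕ) / 4) + ((p : ℕ) % 4) % 2, by have := p.2; omega⟩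

/-- The sign of the `p`-th letter of the relator. -/
def relSign (g : ℕ) (p : Fin (4 * g)) : Bool := decide ((p : ℕ) % 4 < 2)

/-- The relator `[a₁,b₁][a₂,b₂]⋯[a_g,b_g]` as a word (list of signed letters). -/
def relatorWord (g : ℕ) : List (Letter g) :=
  (List.finRange (4 * g)).map fun p => (relLabel g p, relSign g p)

/-- The relator as an element of the free group on the `2g` generators. -/
def relatorF (g : ℕ) : FreeGroup (Fin (2 * g)) :=
  ((relatorWord g).map fun l => if l.2 then FreeGroup.of l.1 else (FreeGroup.of l.1)⁻¹).prod

/-- The surface group `Γ_g = ⟨a₁,b₁,…,a_g,b_g ∣ [a₁,b₁]⋯[a_g,b_g]⟩`. -/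
abbrev Gamma (g : ℕ) := PresentedGroup ({relatorF g} : Set (FreeGroup (Fin (2 * g))))

/-- The image of a signed letter in `Γ_g`. -/
def letterG {g : ℕ} (l : Letter g) : Gamma g :=
  if l.2 then PresentedGroup.of l.1 else (PresentedGroup.of l.1)⁻¹

/-- The image of a word in `Γ_g`. -/
def wordG {g : ℕ} (w : List (Letter g)) : Gamma g := (w.map letterG).prod

/-- `ℓ(γ^{Γ_g})`: the minimal length of a word in the generators representing the
conjugacy class of `γ` in `Γ_g`. -/
def conjLen {g : ℕ} (γ : Gamma g) : ℕ :=
  sInf {n | ∃ w : List (Letter g), w.length = n ∧ ∃ x : Gamma g, x * wordG w * x⁻¹ = γ}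

/-! ### Half-edge positions around a vertex of `Σ_g`

The `4g` half-edges around the vertex `o` of `Σ_g` come in the (clockwise) cyclic
order `a₁`-out, `b₁`-in, `a₁`-in, `b₁`-out, `a₂`-out, `b₂`-in, `a₂`-in, `b₂`-out, …
-/

/-- Position of the outgoing `ℓ`-labeled half-edge in the cyclic order. -/
def posOut {g : ℕ} (ℓ : Fin (2 * g)) : ℕ :=
  if (ℓ : ℕ) % 2 = 0 then 2 * (ℓ : ℕ) else 2 * (ℓ : ℕ) + 1

/-- Position of the incoming `ℓ`-labeled half-edge in the cyclic order. -/
def posIn {g : ℕ} (ℓ : Fin (2 * g)) : ℕ :=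
  if (ℓ : ℕ) % 2 = 0 then 2 * (ℓ : ℕ) + 2 else 2 * (ℓ : ℕ) - 1

/-- The position of the half-edge through which a traversal of a dart with signed
letter `s` *arrives* at its terminal vertex. -/
def posArr {g : ℕ} (s : Letter g) : ℕ := if s.2 then posIn s.1 else posOut s.1

/-- The position of the half-edge through which a traversal of a dart with signed
letter `s` *leaves* its initial vertex. -/
def posLv {g : ℕ} (s : Letter g) : ℕ := if s.2 then posOut s.1 else posIn s.1

/-- The number of half-edges strictly between the arrival half-edge of `s` and the
departure half-edge of `t`, in the clockwise cyclic order of the `4g` half-edges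
around a vertex. -/
def gapN {g : ℕ} (s t : Letter g) : ℕ := (posLv t + 4 * g - (posArr s + 1)) % (4 * g)

/-! ### Combinatorial complexes -/

/-- A combinatorial at-most-2-dimensional CW-complex with directed edges labeled by
the generators of `Γ_g`, and 2-cells recorded by their boundary walks (lists of
darts, i.e. edges with a direction of traversal). -/
structure Complex (g : ℕ) where
  V : Type
  E : Type
  F : Type
  src : E → V
  dst : E → V
  lab : E → Fin (2 * g)
  bdry : F → List (E × Bool)

namespace Complex

variable {g : ℕ} (Y : Complex g)

/-- Darts: edges together with a direction of traversal (`true` = forward). -/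
abbrev D := Y.E × Bool

/-- The initial vertex of a dart. -/
def dTail (d : Y.D) : Y.V := if d.2 then Y.src d.1 else Y.dst d.1

/-- The terminal vertex of a dart. -/
def dHead (d : Y.D) : Y.V := if d.2 then Y.dst d.1 else Y.src d.1

/-- The reversal of a dart. -/
def dRev (d : Y.D) : Y.D := (d.1, !d.2)

/-- The signed letter read by a dart. -/
def dLet (d : Y.D) : Letter g := (Y.lab d.1, d.2)

/-- The word read along a list of darts. -/
def wordOf (l : List Y.D) : List (Letter g) := l.map Y.dLet

/-- The reversed walk. -/
def revW (l : List Y.D) : List Y.D := (l.map Y.dRev).reverse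

/-- `WalkFrom u v l` : `l` is a walk (edge-path) from `u` to `v`. -/
inductive WalkFrom : Y.V → Y.V → List Y.D → Prop
  | nil (v : Y.V) : WalkFrom v v []
  | cons (d : Y.D) {v : Y.V} {l : List Y.D} :
      WalkFrom (Y.dHead d) v l → WalkFrom (Y.dTail d) v (d :: l)

/-- All darts of `l` use edges from the set `sE`. -/
def InSet (sE : Set Y.E) (l : List Y.D) : Prop := ∀ d ∈ l, d.1 ∈ sE

/-- Two darts are adjacent (can be traversed consecutively). -/
def adj (d d' : Y.D) : Prop := Y.dHead d = Y.dTail d'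

/-- A nonempty closed walk. -/
def IsCycle (c : List Y.D) : Prop := c ≠ [] ∧ ∃ v, Y.WalkFrom v v c

/-- **P1**: at most one incoming and at most one outgoing `ℓ`-labeled edge at every
vertex, for every label `ℓ`. -/
def P1 : Prop :=
  (∀ e e' : Y.E, Y.src e = Y.src e' → Y.lab e = Y.lab e' → e = e') ∧
  (∀ e e' : Y.E, Y.dst e = Y.dst e' → Y.lab e = Y.lab e' → e = e')

/-- **P2**: every walk reading a word equal to `1` in `Γ_g` is closed. -/
def P2 : Prop :=
  ∀ (u v : Y.V) (l : List Y.D), Y.WalkFrom u v l → wordG (Y.wordOf l) = 1 → u = v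

/-- **P3**: every 2-cell is glued along a closed walk reading the relator
`[a₁,b₁]⋯[a_g,b_g]`, and every such closed walk bounds at most one 2-cell. -/
def P3 : Prop :=
  (∀ f : Y.F, (∃ v, Y.WalkFrom v v (Y.bdry f)) ∧ Y.wordOf (Y.bdry f) = relatorWord g) ∧
  Function.Injective Y.bdry

/-- A combinatorial covering space of `Σ_g`: every vertex has exactly one outgoing
and one incoming edge of each label, every walk reading the relator is closed, and
every closed walk reading the relator bounds exactly one `4g`-gon. -/
def IsCovering : Prop :=
  Y.P1 ∧ Y.P3 ∧
  (∀ (v : Y.V) (ℓ : Fin (2 * g)), ∃ e, Y.src e = v ∧ Y.lab e = ℓ) ∧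
  (∀ (v : Y.V) (ℓ : Fin (2 * g)), ∃ e, Y.dst e = v ∧ Y.lab e = ℓ) ∧
  (∀ (u v : Y.V) (l : List Y.D), Y.WalkFrom u v l → Y.wordOf l = relatorWord g → u = v) ∧
  (∀ (v : Y.V) (l : List Y.D), Y.WalkFrom v v l → Y.wordOf l = relatorWord g →
    ∃ f, Y.bdry f = l)

end Complex

/-- A morphism of labeled complexes: maps cells to cells of the same dimension and
respects sources, targets, labels and face boundaries (equivalently, commutes with
the immersions to `Σ_g`). -/
structure Hom {g : ℕ} (Y Z : Complex g) where
  mV : Y.V → Z.V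
  mE : Y.E → Z.E
  mF : Y.F → Z.F
  hsrc : ∀ e, Z.src (mE e) = mV (Y.src e)
  hdst : ∀ e, Z.dst (mE e) = mV (Y.dst e)
  hlab : ∀ e, Z.lab (mE e) = Y.lab e
  hbdry : ∀ f, Z.bdry (mF f) = (Y.bdry f).map fun d => (mE d.1, d.2)

namespace Hom

variable {g : ℕ} {Y Z : Complex g}

/-- The induced map on darts. -/
def mD (φ : Hom Y Z) (d : Y.D) : Z.D := (φ.mE d.1, d.2)

/-- Injectivity (an embedding of complexes). -/
def Inj (φ : Hom Y Z) : Prop :=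
  Function.Injective φ.mV ∧ Function.Injective φ.mE ∧ Function.Injective φ.mF

end Hom

namespace Complex

variable {g : ℕ} (Y : Complex g)

/-- A tiled surface: a complex which embeds into a combinatorial covering space of
`Σ_g` (compatibly with directions and labels). -/
def IsTiledSurface : Prop :=
  ∃ Z : Complex g, Z.IsCovering ∧ ∃ φ : Hom Y Z, φ.Inj

/-- Connectivity of a complex (any two vertices are joined by a walk). -/
def Connected : Prop := Nonempty Y.V ∧ ∀ v w : Y.V, ∃ l, Y.WalkFrom v w l

/-! ### Blocks and chains -/

/-- A block: a nonempty walk such that successive darts have no half-edges between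
them (hence it reads a subword of the cyclic relator, of length at most `4g`). -/
def IsBlock (l : List Y.D) : Prop :=
  l ≠ [] ∧ l.length ≤ 4 * g ∧
  List.Chain' (fun d d' => Y.adj d d' ∧ gapN (Y.dLet d) (Y.dLet d') = 0) l

/-- Two blocks are consecutive: concatenation is a walk and there is exactly one
half-edge between the last dart of the first and the first dart of the second. -/
def chainStep (b b' : List Y.D) : Prop :=
  ∃ d d', b.getLast? = some d ∧ b'.head? = some d' ∧ Y.adj d d' ∧
    gapN (Y.dLet d) (Y.dLet d') = 1

/-- A chain: a nonempty sequence of consecutive blocks. -/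
def IsChain (bs : List (List Y.D)) : Prop :=
  bs ≠ [] ∧ (∀ b ∈ bs, Y.IsBlock b) ∧ List.Chain' Y.chainStep bs

/-- A cyclic chain: a chain whose blocks pave an entire cycle. -/
def IsCyclicChain (bs : List (List Y.D)) : Prop :=
  Y.IsChain bs ∧ ∃ b b', bs.getLast? = some b ∧ bs.head? = some b' ∧ Y.chainStep b b'

/-- A long chain: a chain of consecutive blocks of lengths `2g, 2g−1, …, 2g−1, 2g`. -/
def IsLongChain (bs : List (List Y.D)) : Prop :=
  Y.IsChain bs ∧ ∃ k, bs.map List.length = 2 * g :: (List.replicate k (2 * g - 1) ++ [2 * g])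

/-- A half-chain: a cyclic chain all of whose blocks have length `2g − 1`. -/
def IsHalfChain (bs : List (List Y.D)) : Prop :=
  Y.IsCyclicChain bs ∧ ∀ b ∈ bs, b.length = 2 * g - 1

/-! ### Boundary cycles of the thick version (relative to sets of present edges and
faces), via the ribbon structure -/

/-- `nextD sE d d'`: among darts (with edge in `sE`) leaving the head of `d`, the
dart `d'` is the first one in clockwise order after the arrival half-edge of `d`.
This is the successor map whose orbits trace the boundary components of the thick
version of the ribbon graph. -/
def nextD (sE : Set Y.E) (d d' : Y.D) : Prop :=
  d'.1 ∈ sE ∧ Y.adj d d' ∧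
  ∀ d'' : Y.D, d''.1 ∈ sE → Y.adj d d'' →
    gapN (Y.dLet d) (Y.dLet d') ≤ gapN (Y.dLet d) (Y.dLet d'')

/-- The corner between the consecutive darts `d, d'` is filled by a face from `sF`. -/
def faceStep (sF : Set Y.F) (d d' : Y.D) : Prop :=
  ∃ f ∈ sF, [d, d'] <:+: (Y.bdry f ++ Y.bdry f)

/-- One step along the boundary of the thick version. -/
def bStep (sE : Set Y.E) (sF : Set Y.F) (d d' : Y.D) : Prop :=
  d.1 ∈ sE ∧ Y.nextD sE d d' ∧ ¬ Y.faceStep sF d d'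

/-- A (finite segment of a) boundary cycle of the thick version. -/
def BPath (sE : Set Y.E) (sF : Set Y.F) (l : List Y.D) : Prop :=
  l ≠ [] ∧ Y.InSet sE l ∧ List.Chain' (Y.bStep sE sF) l

/-- A (finite) boundary cycle of the thick version. -/
def BCycle (sE : Set Y.E) (sF : Set Y.F) (l : List Y.D) : Prop :=
  Y.BPath sE sF l ∧ ∃ d d', l.getLast? = some d ∧ l.head? = some d' ∧ Y.bStep sE sF d d'

/-- A dart lying on the boundary of the thick version. -/
def IsBDart (sE : Set Y.E) (sF : Set Y.F) (d : Y.D) : Prop :=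
  d.1 ∈ sE ∧ ∃ d', Y.nextD sE d d' ∧ ¬ Y.faceStep sF d d'

/-- Boundary reduced: no boundary cycle contains a long block (length `≥ 2g+1`) or
a long chain. -/
def BoundaryReduced (sE : Set Y.E) (sF : Set Y.F) : Prop :=
  (∀ l, Y.BPath sE sF l → ¬ (Y.IsBlock l ∧ 2 * g + 1 ≤ l.length)) ∧
  (∀ bs, Y.IsLongChain bs → ¬ Y.BPath sE sF bs.flatten)

/-- Strongly boundary reduced: no boundary cycle contains a half-block (length
exactly `2g`) or a half-chain. -/
def StronglyBoundaryReduced (sE : Set Y.E) (sF : Set Y.F) : Prop :=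
  (∀ l, Y.BPath sE sF l → ¬ (Y.IsBlock l ∧ l.length = 2 * g)) ∧
  (∀ bs, Y.IsHalfChain bs → ¬ Y.BCycle sE sF bs.flatten)

/-! ### Combinatorial homotopy of walks -/

/-- A closed walk traversing the boundary of a face from `sF` (in either direction,
starting anywhere). -/
def faceLoop (sF : Set Y.F) (b : List Y.D) : Prop :=
  ∃ f ∈ sF, ∃ n, b = (Y.bdry f).rotate n ∨ b = Y.revW ((Y.bdry f).rotate n)

/-- Elementary homotopy move: insertion of a backtrack or of a face boundary. -/
def elemMove (sE : Set Y.E) (sF : Set Y.F) (l l' : List Y.D) : Prop :=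
  (∃ (l₁ l₂ : List Y.D) (d : Y.D), d.1 ∈ sE ∧ l = l₁ ++ l₂ ∧ l' = l₁ ++ d :: Y.dRev d :: l₂) ∨
  (∃ l₁ l₂ b, Y.faceLoop sF b ∧ l = l₁ ++ l₂ ∧ l' = l₁ ++ b ++ l₂)

/-- Homotopy (rel endpoints) of walks from `u` to `v`, inside the subcomplex with
edge set `sE` and face set `sF`. -/
def Homotopic (sE : Set Y.E) (sF : Set Y.F) (u v : Y.V) (c c' : List Y.D) : Prop :=
  Relation.EqvGen
    (fun a b =>
      Y.WalkFrom u v a ∧ Y.WalkFrom u v b ∧ Y.InSet sE a ∧ Y.InSet sE b ∧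
        (Y.elemMove sE sF a b ∨ Y.elemMove sE sF b a)) c c'

/-- A closed walk which is null-homotopic. -/
def NullHomotopic (sE : Set Y.E) (sF : Set Y.F) (c : List Y.D) : Prop :=
  ∃ v, Y.WalkFrom v v c ∧ Y.Homotopic sE sF v v c []

/-- An essential cycle: a nonempty closed walk which is not null-homotopic. -/
def Essential (sE : Set Y.E) (sF : Set Y.F) (c : List Y.D) : Prop :=
  Y.IsCycle c ∧ Y.InSet sE c ∧ ¬ Y.NullHomotopic sE sF c

/-- Free homotopy of closed walks. -/
def FreelyHomotopic (sE : Set Y.E) (sF : Set Y.F) (c c' : List Y.D) : Prop :=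
  ∃ u v q, Y.WalkFrom u u c ∧ Y.WalkFrom v v c' ∧ Y.WalkFrom u v q ∧
    Y.InSet sE q ∧ Y.InSet sE c ∧ Y.InSet sE c' ∧
    Y.Homotopic sE sF u u c (q ++ c' ++ Y.revW q)

/-- `c` is a shortest representative of its free homotopy class. -/
def ShortestRep (sE : Set Y.E) (sF : Set Y.F) (c : List Y.D) : Prop :=
  ∀ c', Y.FreelyHomotopic sE sF c c' → c.length ≤ c'.length

end Complex

/-- `s` occurs as a contiguous subword of the cyclic word `c`. -/
def cycContains {α : Type*} (c s : List α) : Prop :=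
  s ≠ [] ∧ s.length ≤ c.length ∧ s <:+: (c ++ c)

namespace Complex

variable {g : ℕ} (Y : Complex g)

/-- The cycle `c` contains no long block and no long chain. -/
def NoLongBlockOrChainCyc (c : List Y.D) : Prop :=
  (∀ s, cycContains c s → ¬ (Y.IsBlock s ∧ 2 * g + 1 ≤ s.length)) ∧
  (∀ bs, Y.IsLongChain bs → ¬ cycContains c bs.flatten)

/-- A (cyclically) non-backtracking cycle. -/
def NonBacktrackingCyc (c : List Y.D) : Prop :=
  ¬ ∃ d : Y.D, cycContains c [d, Y.dRev d]

/-- A cycle which is essential and a shortest representative of its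
free homotopy class. -/
def GoodCycle (c : List Y.D) : Prop :=
  Y.IsCycle c ∧ Y.Essential Set.univ Set.univ c ∧ Y.ShortestRep Set.univ Set.univ c

/-! ### Cells and components of complements -/

/-- The cells of a complex. -/
def Cell := Y.V ⊕ Y.E ⊕ Y.F

def vCell (v : Y.V) : Y.Cell := Sum.inl v
def eCell (e : Y.E) : Y.Cell := Sum.inr (Sum.inl e)
def fCell (f : Y.F) : Y.Cell := Sum.inr (Sum.inr f)

/-- Basic incidence of (open) cells. -/
def inc0 : Y.Cell → Y.Cell → Prop := fun c c' =>
  match c, c' with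
  | Sum.inl v, Sum.inr (Sum.inl e) => Y.src e = v ∨ Y.dst e = v
  | Sum.inl v, Sum.inr (Sum.inr f) => ∃ d ∈ Y.bdry f, Y.dTail d = v
  | Sum.inr (Sum.inl e), Sum.inr (Sum.inr f) => ∃ b, (e, b) ∈ Y.bdry f
  | _, _ => False

/-- Symmetrized incidence of cells. -/
def incid (c c' : Y.Cell) : Prop := Y.inc0 c c' ∨ Y.inc0 c' c

end Complex

/-- A triple of subsets of the cells of a complex `Y` (a prospective subcomplex). -/
structure SubC {g : ℕ} (Y : Complex g) where
  sV : Set Y.V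
  sE : Set Y.E
  sF : Set Y.F

namespace SubC

variable {g : ℕ} {Y : Complex g}

/-- `S` is an actual subcomplex: closed under taking boundaries of cells. -/
def IsSub (S : SubC Y) : Prop :=
  (∀ e ∈ S.sE, Y.src e ∈ S.sV ∧ Y.dst e ∈ S.sV) ∧
  (∀ f ∈ S.sF, ∀ d ∈ Y.bdry f, d.1 ∈ S.sE)

/-- Containment of subcomplexes. -/
def le (S T : SubC Y) : Prop := S.sV ⊆ T.sV ∧ S.sE ⊆ T.sE ∧ S.sF ⊆ T.sF

/-- Compactness: finitely many cells. -/
def Compact (S : SubC Y) : Prop := S.sV.Finite ∧ S.sE.Finite ∧ S.sF.Finite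

/-- Connectivity of the subcomplex. -/
def Connected (S : SubC Y) : Prop :=
  S.sV.Nonempty ∧ ∀ v ∈ S.sV, ∀ w ∈ S.sV, ∃ l, Y.WalkFrom v w l ∧ Y.InSet S.sE l

/-- Image of a subcomplex under a morphism. -/
def image {Z : Complex g} (φ : Hom Y Z) (S : SubC Y) : SubC Z :=
  ⟨φ.mV '' S.sV, φ.mE '' S.sE, φ.mF '' S.sF⟩

end SubC

/-- The whole complex, as a subcomplex of itself. -/
def fullSub {g : ℕ} (Y : Complex g) : SubC Y := ⟨Set.univ, Set.univ, Set.univ⟩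

namespace Complex

variable {g : ℕ} (Y : Complex g)

/-- Membership of a cell in a subcomplex. -/
def inSub (S : SubC Y) : Y.Cell → Prop := fun c =>
  match c with
  | Sum.inl v => v ∈ S.sV
  | Sum.inr (Sum.inl e) => e ∈ S.sE
  | Sum.inr (Sum.inr f) => f ∈ S.sF

/-- Reachability of cells through the open complement of the subcomplex `S`
(= lying in the same connected component of the complement). -/
def reachS (S : SubC Y) (c c' : Y.Cell) : Prop :=
  Relation.ReflTransGen (fun a b => Y.incid a b ∧ ¬ Y.inSub S a ∧ ¬ Y.inSub S b) c c'

end Complex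

/-- The closure (as a subcomplex) of the connected component of the cell `c₀` in the
complement of the subcomplex `S`. -/
def compCl {g : ℕ} (Y : Complex g) (S : SubC Y) (c₀ : Y.Cell) : SubC Y :=
  let cF : Set Y.F := {f | Y.reachS S c₀ (Y.fCell f)}
  let cE : Set Y.E :=
    {e | Y.reachS S c₀ (Y.eCell e)} ∪ {e | ∃ f ∈ cF, ∃ b, (e, b) ∈ Y.bdry f}
  let cV : Set Y.V :=
    {v | Y.reachS S c₀ (Y.vCell v)} ∪ {v | ∃ e ∈ cE, Y.src e = v ∨ Y.dst e = v}
  ⟨cV, cE, cF⟩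

/-- The subcomplex has exactly one boundary cycle (which covers all boundary darts). -/
def OneBdry {g : ℕ} (Y : Complex g) (S : SubC Y) : Prop :=
  ∃ δ, Y.BCycle S.sE S.sF δ ∧ ∀ d, Y.IsBDart S.sE S.sF d → d ∈ δ

/-- The subcomplex has exactly two (disjoint) boundary cycles, covering all
boundary darts. -/
def TwoBdry {g : ℕ} (Y : Complex g) (S : SubC Y) : Prop :=
  ∃ δ₁ δ₂, Y.BCycle S.sE S.sF δ₁ ∧ Y.BCycle S.sE S.sF δ₂ ∧ δ₁.Disjoint δ₂ ∧
    ∀ d, Y.IsBDart S.sE S.sF d → d ∈ δ₁ ∨ d ∈ δ₂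

/-- The boundary-reduced closure of `S` inside `Y`: the intersection of all
intermediate boundary reduced subcomplexes. -/
def BRcl {g : ℕ} (Y : Complex g) (S : SubC Y) : SubC Y where
  sV := ⋂ T ∈ {T : SubC Y | T.IsSub ∧ S.le T ∧ Y.BoundaryReduced T.sE T.sF}, T.sV
  sE := ⋂ T ∈ {T : SubC Y | T.IsSub ∧ S.le T ∧ Y.BoundaryReduced T.sE T.sF}, T.sE
  sF := ⋂ T ∈ {T : SubC Y | T.IsSub ∧ S.le T ∧ Y.BoundaryReduced T.sE T.sF}, T.sF

/-- The strongly-boundary-reduced closure of `S` inside `Y`. -/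
def SBRcl {g : ℕ} (Y : Complex g) (S : SubC Y) : SubC Y where
  sV := ⋂ T ∈ {T : SubC Y | T.IsSub ∧ S.le T ∧ Y.StronglyBoundaryReduced T.sE T.sF}, T.sV
  sE := ⋂ T ∈ {T : SubC Y | T.IsSub ∧ S.le T ∧ Y.StronglyBoundaryReduced T.sE T.sF}, T.sE
  sF := ⋂ T ∈ {T : SubC Y | T.IsSub ∧ S.le T ∧ Y.StronglyBoundaryReduced T.sE T.sF}, T.sF

/-- An isomorphism between the subcomplex `S` of `Y` and the subcomplex `T` of `Z`. -/
structure SubEquiv {g : ℕ} (Y : Complex g) (S : SubC Y) (Z : Complex g) (T : SubC Z) where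
  fV : Y.V → Z.V
  fE : Y.E → Z.E
  fF : Y.F → Z.F
  bijV : Set.BijOn fV S.sV T.sV
  bijE : Set.BijOn fE S.sE T.sE
  bijF : Set.BijOn fF S.sF T.sF
  hsrc : ∀ e ∈ S.sE, Z.src (fE e) = fV (Y.src e)
  hdst : ∀ e ∈ S.sE, Z.dst (fE e) = fV (Y.dst e)
  hlab : ∀ e ∈ S.sE, Z.lab (fE e) = Y.lab e
  hbdry : ∀ f ∈ S.sF, Z.bdry (fF f) = (Y.bdry f).map fun d => (fE d.1, d.2)

/-- `FunnelComponent Y S c₀`: the connected component of the cell `c₀` in the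
complement of the subcomplex `S` is a twice-punctured sphere with one funnel and
one fake-puncture.  Rendered combinatorially: the component contains infinitely
many `4g`-gons (the funnel); there is a boundary cycle `δ` of `S` adjacent to the
component, it is unique (one fake-puncture), and every closed walk inside the
closure of the component is freely homotopic there to a power of `δ` or of its
inverse (so the closure is a half-open annulus bounded by `δ`). -/
def FunnelComponent {g : ℕ} (Y : Complex g) (S : SubC Y) (c₀ : Y.Cell) : Prop :=
  {f : Y.F | Y.reachS S c₀ (Y.fCell f)}.Infinite ∧
  ∃ δ : List Y.D, Y.BCycle S.sE S.sF δ ∧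
    (∃ d ∈ δ, ∃ c', Y.incid (Y.eCell d.1) c' ∧ Y.reachS S c₀ c') ∧
    (∀ δ', Y.BCycle S.sE S.sF δ' →
      (∃ d ∈ δ', ∃ c', Y.incid (Y.eCell d.1) c' ∧ Y.reachS S c₀ c') →
      ∃ n, δ' = δ.rotate n) ∧
    (∀ (v : Y.V) (l : List Y.D), Y.WalkFrom v v l →
      Y.InSet ({e | Y.reachS S c₀ (Y.eCell e)} ∪ {e | ∃ b, (e, b) ∈ δ}) l →
      ∃ n,
        Y.FreelyHomotopic ({e | Y.reachS S c₀ (Y.eCell e)} ∪ {e | ∃ b, (e, b) ∈ δ})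
          {f | Y.reachS S c₀ (Y.fCell f)} l ((List.replicate n δ).flatten) ∨
        Y.FreelyHomotopic ({e | Y.reachS S c₀ (Y.eCell e)} ∪ {e | ∃ b, (e, b) ∈ δ})
          {f | Y.reachS S c₀ (Y.fCell f)} l ((List.replicate n (Y.revW δ)).flatten))

/-- `Y` contains a funnel: an essential cycle `δ` of `Y` cutting off an infinite
region of `Y` which is attached to the rest of `Y` only along `δ`, contains no
boundary of `Y`, and is a half-open annulus (every loop inside is freely homotopic
to a power of `δ`); i.e. an end of `Y` which is a puncture of the ambient covering. -/
def HasFunnel {g : ℕ} (Y : Complex g) : Prop :=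
  ∃ (δ : List Y.D) (sE : Set Y.E) (sF : Set Y.F),
    Y.IsCycle δ ∧ Y.Essential Set.univ Set.univ δ ∧
    (∀ d ∈ δ, d.1 ∉ sE) ∧ sE.Nonempty ∧ sF.Infinite ∧
    (∀ f ∈ sF, ∀ d ∈ Y.bdry f, d.1 ∈ sE ∨ ∃ b, (d.1, b) ∈ δ) ∧
    (∀ f : Y.F, (∃ d ∈ Y.bdry f, d.1 ∈ sE) → f ∈ sF) ∧
    (∀ d : Y.D, d.1 ∈ sE → ¬ Y.IsBDart Set.univ Set.univ d) ∧
    (∀ v : Y.V, (∃ e ∈ sE, Y.src e = v ∨ Y.dst e = v) → (∀ d ∈ δ, Y.dTail d ≠ v) →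
      ∀ e' : Y.E, (Y.src e' = v ∨ Y.dst e' = v) → e' ∈ sE) ∧
    (∀ (v : Y.V) (l : List Y.D), Y.WalkFrom v v l →
      Y.InSet (sE ∪ {e | ∃ b, (e, b) ∈ δ}) l →
      ∃ n,
        Y.FreelyHomotopic (sE ∪ {e | ∃ b, (e, b) ∈ δ}) sF l
          ((List.replicate n δ).flatten) ∨
        Y.FreelyHomotopic (sE ∪ {e | ∃ b, (e, b) ∈ δ}) sF l
          ((List.replicate n (Y.revW δ)).flatten))

/-- The fundamental group of `Y` is cyclic: some closed walk `c` generates all free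
homotopy classes of loops.  (For a connected surface this is *equivalent to NOT
having genus ≥ 1 or at least 3 boundary components/punctures*.) -/
def CyclicPi1 {g : ℕ} (Y : Complex g) : Prop :=
  ∃ c : List Y.D, ∀ (v : Y.V) (l : List Y.D), Y.WalkFrom v v l →
    ∃ n,
      Y.FreelyHomotopic Set.univ Set.univ l ((List.replicate n c).flatten) ∨
      Y.FreelyHomotopic Set.univ Set.univ l ((List.replicate n (Y.revW c)).flatten)

/-! ### The covering space `J\~Σ_g` and the core surface of `J` -/

/-- Right cosets `Jx` of `J` in `Γ_g` — the vertices (and faces) of `J\~Σ_g`. -/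
abbrev Cos (g : ℕ) (J : Subgroup (Gamma g)) := Quotient (QuotientGroup.rightRel J)

/-- The coset `Jx`. -/
def mkCos (g : ℕ) (J : Subgroup (Gamma g)) (x : Gamma g) : Cos g J :=
  Quotient.mk _ x

/-- Right multiplication on right cosets. -/
def rmul (g : ℕ) (J : Subgroup (Gamma g)) (x : Gamma g) : Cos g J → Cos g J :=
  Quotient.map (· * x) (by
    intro a b hab
    have h1 : b * a⁻¹ ∈ J := QuotientGroup.rightRel_apply.mp hab
    refine QuotientGroup.rightRel_apply.mpr ?_
    have h2 : b * x * (a * x)⁻¹ = b * a⁻¹ := by group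
    rw [h2]; exact h1)

/-- The walk in `J\~Σ_g` starting at a vertex and reading a given word. -/
def relWalk (g : ℕ) (J : Subgroup (Gamma g)) :
    Cos g J → List (Letter g) → List ((Cos g J × Fin (2 * g)) × Bool)
  | _, [] => []
  | v, (ℓ, true) :: w =>
      ((v, ℓ), true) :: relWalk g J (rmul g J (PresentedGroup.of ℓ) v) w
  | v, (ℓ, false) :: w =>
      ((rmul g J (PresentedGroup.of ℓ)⁻¹ v, ℓ), false) ::
        relWalk g J (rmul g J (PresentedGroup.of ℓ)⁻¹ v) w

/-- The covering space `Υ = J\~Σ_g` of `Σ_g` corresponding to the subgroup `J`,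
with the CW-structure pulled back from `Σ_g`: vertices and `4g`-gons are the right
cosets of `J`, and each vertex carries one outgoing edge per label. -/
def cover (g : ℕ) (J : Subgroup (Gamma g)) : Complex g where
  V := Cos g J
  E := Cos g J × Fin (2 * g)
  F := Cos g J
  src e := e.1
  dst e := rmul g J (PresentedGroup.of e.2) e.1
  lab e := e.2
  bdry v := relWalk g J v (relatorWord g)

/-- The map `J₁\~Σ_g → J₂\~Σ_g` on vertices, for `J₁ ≤ J₂`. -/
def coverMapV {g : ℕ} {J₁ J₂ : Subgroup (Gamma g)} (h : J₁ ≤ J₂) :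
    Cos g J₁ → Cos g J₂ :=
  Quotient.map id (by
    intro a b hab
    have h1 : b * a⁻¹ ∈ J₁ := QuotientGroup.rightRel_apply.mp hab
    exact QuotientGroup.rightRel_apply.mpr (h h1))

/-- The natural covering morphism on edges. -/
def coverMapE {g : ℕ} {J₁ J₂ : Subgroup (Gamma g)} (h : J₁ ≤ J₂)
    (e : (cover g J₁).E) : (cover g J₂).E :=
  (coverMapV h e.1, e.2)

/-- The natural covering morphism on darts. -/
def coverMapD {g : ℕ} {J₁ J₂ : Subgroup (Gamma g)} (h : J₁ ≤ J₂)
    (d : (cover g J₁).D) : (cover g J₂).D :=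
  (coverMapE h d.1, d.2)

/-- The cycle `c` in `J\~Σ_g` represents the conjugacy class of `γ` in `J`
(conjugacy classes in `J` ↔ free homotopy classes of essential loops in `J\~Σ_g`). -/
def RepCls {g : ℕ} (J : Subgroup (Gamma g)) (c : List ((cover g J).D))
    (γ : Gamma g) : Prop :=
  ∃ x j : Gamma g, j ∈ J ∧
    (cover g J).WalkFrom (mkCos g J x) (mkCos g J x) c ∧
    x * wordG ((cover g J).wordOf c) * x⁻¹ = j * γ * j⁻¹

/-- Step (i) of the definition of the core surface: the edges lying on some
shortest representative cycle of an essential free homotopy class. -/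
def coreE1 (g : ℕ) (J : Subgroup (Gamma g)) : Set (cover g J).E :=
  {e | ∃ c, (cover g J).GoodCycle c ∧ ∃ b, (e, b) ∈ c}

/-- The vertices of step (i) of the definition of the core surface. -/
def coreV1 (g : ℕ) (J : Subgroup (Gamma g)) : Set (cover g J).V :=
  {v | ∃ e ∈ coreE1 g J, (cover g J).src e = v ∨ (cover g J).dst e = v}

/-- Step (i) of the definition of the core surface, as a subcomplex of `J\~Σ_g`. -/
def coreS1 (g : ℕ) (J : Subgroup (Gamma g)) : SubC (cover g J) :=
  ⟨coreV1 g J, coreE1 g J, ∅⟩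

/-- A cell of `J\~Σ_g` lying in a connected component of the complement of step (i)
which contains only finitely many `4g`-gons. -/
def coreFin (g : ℕ) (J : Subgroup (Gamma g)) (c : (cover g J).Cell) : Prop :=
  ¬ (cover g J).inSub (coreS1 g J) c ∧
  {f : (cover g J).F | (cover g J).reachS (coreS1 g J) c ((cover g J).fCell f)}.Finite

open Classical in
/-- The core surface `Core(J)` of a subgroup `J ≤ Γ_g`, as a subcomplex of
`Υ = J\~Σ_g`: (i) the union of all shortest representative cycles of essential
free homotopy classes in `Υ`, together with (ii) all connected components of the
complement containing finitely many `4g`-gons.  For the trivial subgroup it is a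
single vertex. -/
def coreSub (g : ℕ) (J : Subgroup (Gamma g)) : SubC (cover g J) :=
  if J = ⊥ then ⟨{mkCos g J 1}, ∅, ∅⟩
  else
    ⟨coreV1 g J ∪ {v | coreFin g J ((cover g J).vCell v)},
     coreE1 g J ∪ {e | coreFin g J ((cover g J).eCell e)},
     {f | coreFin g J ((cover g J).fCell f)}⟩

namespace Dehn

structure Sys (P : Type) where
  F : Equiv.Perm P
  i : P → P
  n : ℕ
  hn : 8 ≤ n
  ii : ∀ p, i (i p) = p
  Fn : F ^ n = 1
  s1 : ∀ p, F (i p) ≠ p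
  s2 : ∀ p, F (i (F (i p))) ≠ p
  s3 : ∀ p, F (i (F (i (F (i p))))) ≠ p

inductive Nd (P : Type) where
  | root : Nd P
  | node (u : Nd P) (q : P) (k : ℕ) : Nd P

variable {P : Type} (S : Sys P)

namespace Sys

def sg (p : P) : P := S.F (S.i p)
def sgi (p : P) : P := S.i (S.F.symm p)

theorem sg_sgi (p : P) : S.sg (S.sgi p) = p := by simp [sg, sgi, S.ii]
theorem sgi_sg (p : P) : S.sgi (S.sg p) = p := by simp [sg, sgi, S.ii]
theorem t1 (p : P) : S.sg p ≠ p := S.s1 p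
theorem t2 (p : P) : S.sg (S.sg p) ≠ p := S.s2 p
theorem t3 (p : P) : S.sg (S.sg (S.sg p)) ≠ p := S.s3 p
theorem i_inj {p q : P} (h : S.i p = S.i q) : p = q := by rw [← S.ii p, h, S.ii]
theorem sg_inj {p q : P} (h : S.sg p = S.sg q) : p = q := by rw [← S.sgi_sg p, h, S.sgi_sg]
theorem F_i (p : P) : S.F p = S.sg (S.i p) := by simp [sg, S.ii]
theorem Fs_i (p : P) : S.F.symm p = S.i (S.sgi p) := by simp [sgi, S.ii]

theorem F_n1 (q : P) : (S.F ^ (S.n - 1)) q = S.F.symm q := by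
  have h := S.hn
  apply S.F.injective
  have : (S.F ^ (S.n - 1 + 1)) q = q := by
    rw [show S.n - 1 + 1 = S.n by omega, S.Fn]; rfl
  rw [pow_succ'] at this
  simpa using this
theorem F_pred (m : ℕ) (q : P) : S.F ((S.F ^ m) q) = (S.F ^ (m+1)) q := by
  rw [pow_succ']; rfl
theorem F_n2 (q : P) : (S.F ^ (S.n - 2)) q = S.F.symm (S.F.symm q) := by
  have h := S.hn
  apply S.F.injective
  rw [F_pred, show S.n - 2 + 1 = S.n - 1 by omega, F_n1]; simp
theorem F_n3 (q : P) : (S.F ^ (S.n - 3)) q = S.F.symm (S.F.symm (S.F.symm q)) := by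
  have h := S.hn
  apply S.F.injective
  rw [F_pred, show S.n - 3 + 1 = S.n - 2 by omega, F_n2]; simp

open Nd

/-- right position -/
def R [Inhabited P] : Nd P → P
  | root => default
  | node _ q k => (S.F ^ (k+1)) q
def Lf [Inhabited P] : Nd P → P
  | root => default
  | node _ q 0 => S.sgi (S.i q)
  | node _ q (k+1) => S.i ((S.F ^ (k+1)) q)
def up : Nd P → P → Prop
  | root, _ => True
  | node _ q 0, p => p ≠ S.i q ∧ p ≠ S.sg (S.i q) ∧ p ≠ S.sgi (S.i q)
  | node _ q (k+1), p => p ≠ (S.F ^ (k+2)) q ∧ p ≠ S.i ((S.F ^ (k+1)) q)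

variable [Inhabited P]

def last (u : Nd P) (q : P) : Prop := u ≠ root ∧ q = S.sg (S.R u)
def first (u : Nd P) (q : P) : Prop := u ≠ root ∧ S.sg q = S.Lf u

open Classical in
def kmax (u : Nd P) (q : P) : ℕ := if S.last u q then S.n - 4 else S.n - 3

def Valid : Nd P → Prop
  | root => True
  | node u q k => Valid u ∧ S.up u q ∧ k ≤ S.kmax u q

open Classical in
def right : Nd P → Nd P
  | root => root
  | node u q k => if k < S.kmax u q then node u q (k+1) else
      if S.last u q then node (right u) (S.sgi (S.i (S.R u))) 0 else node u (S.sgi q) 0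
open Classical in
def left : Nd P → Nd P
  | root => root
  | node u q (k+1) => node u q k
  | node u q 0 => if S.first u q then node (left u) (S.sg (S.i (S.Lf u))) (S.n - 4)
      else node u (S.sg q) (S.n - 3)

open Classical in
def step : Nd P → P → Nd P
  | root, p => node root p 0
  | node u q k, p => if p = S.R (node u q k) then S.right (node u q k) else
      if p = S.Lf (node u q k) then S.left (node u q k) else
      if k = 0 ∧ p = S.i q then u else node (node u q k) p 0

open Classical in
theorem step_node (u : Nd P) (q : P) (k : ℕ) (p : P) : S.step (node u q k) p =
    if p = S.R (node u q k) then S.right (node u q k) else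
      if p = S.Lf (node u q k) then S.left (node u q k) else
      if k = 0 ∧ p = S.i q then u else node (node u q k) p 0 := rfl

theorem right_ne (v : Nd P) (h : v ≠ root) : S.right v ≠ root := by
  cases v with
  | root => exact absurd rfl h
  | node u q k => unfold right; split_ifs <;> simp
theorem left_ne (v : Nd P) (h : v ≠ root) : S.left v ≠ root := by
  cases v with
  | root => exact absurd rfl h
  | node u q k => cases k <;> unfold left <;> (try split_ifs) <;> simp

/-- interior: Lf = sgi R -/
theorem R_succ (u : Nd P) (q : P) (k : ℕ) :
    S.R (node u q (k+1)) = S.sg (S.Lf (node u q (k+1))) := by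
  simp only [R, Lf, sg, S.ii, F_pred]
theorem R_zero (u : Nd P) (q : P) : S.R (node u q 0) = S.sg (S.i q) := by
  simp [R, sg, S.ii]
theorem Lf_zero (u : Nd P) (q : P) : S.sg (S.Lf (node u q 0)) = S.i q := by
  simp [Lf, sg_sgi]

theorem up_iff (u : Nd P) (q : P) (k : ℕ) (p : P) : S.up (node u q k) p ↔
    p ≠ S.R (node u q k) ∧ p ≠ S.Lf (node u q k) ∧ ¬ (k = 0 ∧ p = S.i q) := by
  cases k with
  | zero => rw [R_zero]; simp [up, Lf]; tauto
  | succ k => simp [up, R, Lf]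

theorem up_ne_R {v : Nd P} (hv : v ≠ root) {p : P} (h : S.up v p) : p ≠ S.R v := by
  cases v with
  | root => exact absurd rfl hv
  | node u q k => exact ((S.up_iff _ _ _ _).1 h).1
theorem up_ne_L {v : Nd P} (hv : v ≠ root) {p : P} (h : S.up v p) : p ≠ S.Lf v := by
  cases v with
  | root => exact absurd rfl hv
  | node u q k => exact ((S.up_iff _ _ _ _).1 h).2.1

theorem R_ne_L (v : Nd P) (hv : v ≠ root) : S.R v ≠ S.Lf v := by
  cases v with
  | root => exact absurd rfl hv
  | node u q k =>
    cases k with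
    | zero =>
      intro h; have h2 := S.Lf_zero u q
      rw [← h, R_zero] at h2
      exact S.t2 _ h2
    | succ k => rw [R_succ]; exact S.t1 _

theorem L_right (v : Nd P) (hV : S.Valid v) (hv : v ≠ root) : S.Lf (S.right v) = S.i (S.R v) := by
  have hn := S.hn
  cases v with
  | root => exact absurd rfl hv
  | node u q k =>
    obtain ⟨_, hu, hk⟩ := hV
    unfold right
    split_ifs with h1 h2
    · rfl
    · have : k = S.n - 4 := by simp [kmax, h2] at h1 hk; omega
      subst this
      show S.sgi (S.i (S.sgi (S.i (S.R u)))) = S.i ((S.F ^ (S.n - 4 + 1)) q)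
      rw [show S.n - 4 + 1 = S.n - 3 by omega, F_n3, h2.2]
      simp [sg, sgi, S.ii]
    · have : k = S.n - 3 := by simp [kmax, h2] at h1 hk; omega
      subst this
      simp only [Lf, R]
      rw [show S.n - 3 + 1 = S.n - 2 by omega, F_n2]
      simp [sgi, S.ii]

theorem R_left (v : Nd P) (hv : v ≠ root) : S.R (S.left v) = S.i (S.Lf v) := by
  have hn := S.hn
  cases v with
  | root => exact absurd rfl hv
  | node u q k =>
    cases k with
    | succ k => simp [left, R, Lf, S.ii]
    | zero =>
      unfold left
      split_ifs with h1
      · show (S.F ^ (S.n - 4 + 1)) (S.sg (S.i (S.Lf u))) = S.i (S.sgi (S.i q))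
        rw [show S.n - 4 + 1 = S.n - 3 by omega, F_n3, ← h1.2]
        simp [sg, sgi, S.ii]
      · simp only [R, Lf]
        rw [show S.n - 3 + 1 = S.n - 2 by omega, F_n2]
        simp [sg, sgi, S.ii]

theorem not_last_sg {u : Nd P} {q : P} (h : S.up u q) : ¬ S.last u (S.sg q) := by
  rintro ⟨h1, h2⟩
  exact S.up_ne_R h1 h (S.sg_inj h2)
theorem not_first_sgi {u : Nd P} {q : P} (h : S.up u q) : ¬ S.first u (S.sgi q) := by
  rintro ⟨h1, h2⟩
  rw [sg_sgi] at h2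
  exact S.up_ne_L h1 h h2

theorem left_right (v : Nd P) (hV : S.Valid v) : S.left (S.right v) = v := by
  have hn := S.hn
  induction v with
  | root => rfl
  | node u q k ih =>
    obtain ⟨hVu, hu, hk⟩ := hV
    unfold right
    split_ifs with h1 h2
    · rfl
    · have : k = S.n - 4 := by simp [kmax, h2] at h1 hk; omega
      subst this
      have hf : S.first (S.right u) (S.sgi (S.i (S.R u))) :=
        ⟨S.right_ne _ h2.1, by rw [sg_sgi, S.L_right _ hVu h2.1]⟩
      unfold left
      rw [if_pos hf, ih hVu, S.L_right _ hVu h2.1, S.ii, ← h2.2]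
    · have : k = S.n - 3 := by simp [kmax, h2] at h1 hk; omega
      subst this
      unfold left
      rw [if_neg (S.not_first_sgi hu), sg_sgi]

theorem right_left (v : Nd P) (hV : S.Valid v) : S.right (S.left v) = v := by
  have hn := S.hn
  induction v with
  | root => rfl
  | node u q k ih =>
    obtain ⟨hVu, hu, hk⟩ := hV
    cases k with
    | succ k => simp only [left, right]; rw [if_pos (by omega)]
    | zero =>
      unfold left
      split_ifs with h1
      · have hl : S.last (S.left u) (S.sg (S.i (S.Lf u))) :=
          ⟨S.left_ne _ h1.1, by rw [S.R_left _ h1.1]⟩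
        unfold right
        rw [if_neg (by simp [kmax, hl]), if_pos hl, ih hVu, S.R_left _ h1.1, S.ii, ← h1.2, sgi_sg]
      · have hl := S.not_last_sg hu
        unfold right
        rw [if_neg (by simp [kmax, hl]), if_neg hl, sgi_sg]

/-- successor of R-type conditions for up -/
theorem up_sgi {u : Nd P} {q : P} (h : S.up u q) (hl : ¬ S.last u q) : S.up u (S.sgi q) := by
  cases u with
  | root => trivial
  | node w r k =>
    have hR := S.up_ne_R (by simp) h
    rw [up_iff] at h ⊢
    refine ⟨fun h1 => hl ⟨by simp, by rw [← h1, sg_sgi]⟩, fun h1 => ?_, ?_⟩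
    · cases k with
      | zero =>
        have := S.Lf_zero w r
        rw [← h1, sg_sgi] at this
        exact h.2.2 ⟨rfl, this⟩
      | succ k => exact hR (by rw [R_succ, ← h1, sg_sgi])
    · rintro ⟨rfl, h1⟩
      exact hR (by rw [R_zero, ← h1, sg_sgi])

theorem up_sg {u : Nd P} {q : P} (h : S.up u q) (hl : ¬ S.first u q) : S.up u (S.sg q) := by
  cases u with
  | root => trivial
  | node w r k =>
    rw [up_iff] at h ⊢
    refine ⟨fun h1 => ?_, fun h1 => hl ⟨by simp, h1⟩, ?_⟩
    · cases k with
      | zero =>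
        rw [R_zero] at h1
        exact h.2.2 ⟨rfl, S.sg_inj h1⟩
      | succ k => exact h.2.1 (by rw [R_succ] at h1; exact S.sg_inj h1)
    · rintro ⟨rfl, h1⟩
      rw [← S.Lf_zero w r] at h1
      exact h.2.1 (S.sg_inj h1)

theorem up_L {v : Nd P} (hv : v ≠ root) : S.up v (S.sgi (S.Lf v)) := by
  cases v with
  | root => trivial
  | node w r k =>
    rw [up_iff]
    have e := S.sg_sgi (S.Lf (node w r k))
    generalize S.sgi (S.Lf (node w r k)) = x at *
    refine ⟨fun h1 => ?_, fun h1 => ?_, ?_⟩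
    · cases k with
      | zero => rw [R_zero, ← S.Lf_zero w r, ← e] at h1; exact S.t3 _ h1.symm
      | succ k => rw [R_succ, ← e] at h1; exact S.t2 _ h1.symm
    · exact S.t1 x (by rw [e, ← h1])
    · rintro ⟨rfl, h1⟩
      rw [← S.Lf_zero w r, ← e] at h1; exact S.t2 _ h1.symm

theorem up_R {v : Nd P} (hv : v ≠ root) : S.up v (S.sg (S.R v)) := by
  cases v with
  | root => trivial
  | node w r k =>
    rw [up_iff]
    refine ⟨S.t1 _, fun h1 => ?_, ?_⟩
    · cases k with
      | zero =>
        have h2 := S.Lf_zero w r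
        rw [← h1, R_zero] at h2; exact S.t3 _ h2
      | succ k => rw [R_succ] at h1; exact S.t2 _ h1
    · rintro ⟨rfl, h1⟩
      rw [R_zero] at h1; exact S.t2 _ h1

theorem valid_right (v : Nd P) (hV : S.Valid v) : S.Valid (S.right v) := by
  induction v with
  | root => exact hV
  | node u q k ih =>
    obtain ⟨hVu, hu, hk⟩ := hV
    unfold right
    split_ifs with h1 h2
    · exact ⟨hVu, hu, h1⟩
    · exact ⟨ih hVu, by rw [← S.L_right _ hVu h2.1]; exact S.up_L (S.right_ne _ h2.1), Nat.zero_le _⟩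
    · exact ⟨hVu, S.up_sgi hu h2, Nat.zero_le _⟩

theorem valid_left (v : Nd P) (hV : S.Valid v) : S.Valid (S.left v) := by
  have hn := S.hn
  induction v with
  | root => exact hV
  | node u q k ih =>
    obtain ⟨hVu, hu, hk⟩ := hV
    cases k with
    | succ k => exact ⟨hVu, hu, by omega⟩
    | zero =>
      unfold left
      split_ifs with h1
      · exact ⟨ih hVu, by rw [← S.R_left _ h1.1]; exact S.up_R (S.left_ne _ h1.1),
          by unfold kmax; split_ifs <;> omega⟩
      · exact ⟨hVu, S.up_sg hu h1, by simp [kmax, S.not_last_sg hu]⟩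

theorem step_up {v : Nd P} {p : P} (h : S.up v p) : S.step v p = node v p 0 := by
  cases v with
  | root => rfl
  | node u q k =>
    rw [up_iff] at h
    rw [step_node, if_neg h.1, if_neg h.2.1, if_neg h.2.2]

theorem step_R {v : Nd P} (hv : v ≠ root) : S.step v (S.R v) = S.right v := by
  cases v with
  | root => exact absurd rfl hv
  | node u q k => rw [step_node, if_pos rfl]
theorem step_L {v : Nd P} (hv : v ≠ root) : S.step v (S.Lf v) = S.left v := by
  have := S.R_ne_L v hv
  cases v with
  | root => exact absurd rfl hv
  | node u q k => rw [step_node, if_neg this.symm, if_pos rfl]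
theorem step_D (u : Nd P) (q : P) : S.step (node u q 0) (S.i q) = u := by
  rw [step_node, if_neg, if_neg, if_pos ⟨rfl, rfl⟩]
  · rw [← S.Lf_zero u q]; exact S.t1 _
  · rw [R_zero]; exact (S.t1 _).symm

theorem cases_step (v : Nd P) (p : P) : S.up v p ∨ (v ≠ root ∧ p = S.R v) ∨
    (v ≠ root ∧ p = S.Lf v) ∨ ∃ u q, v = node u q 0 ∧ p = S.i q := by
  cases v with
  | root => left; trivial
  | node u q k =>
    rw [up_iff]
    by_cases h1 : p = S.R (node u q k)
    · right; left; exact ⟨by simp, h1⟩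
    by_cases h2 : p = S.Lf (node u q k)
    · right; right; left; exact ⟨by simp, h2⟩
    by_cases h3 : k = 0 ∧ p = S.i q
    · obtain ⟨rfl, h3⟩ := h3
      right; right; right; exact ⟨u, q, rfl, h3⟩
    · left; exact ⟨h1, h2, h3⟩

theorem valid_step (v : Nd P) (p : P) (hV : S.Valid v) : S.Valid (S.step v p) := by
  rcases S.cases_step v p with h | ⟨h, rfl⟩ | ⟨h, rfl⟩ | ⟨u, q, rfl, rfl⟩
  · rw [S.step_up h]; exact ⟨hV, h, Nat.zero_le _⟩
  · rw [S.step_R h]; exact S.valid_right v hV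
  · rw [S.step_L h]; exact S.valid_left v hV
  · rw [S.step_D]; exact hV.1

theorem step_inv (v : Nd P) (p : P) (hV : S.Valid v) : S.step (S.step v p) (S.i p) = v := by
  rcases S.cases_step v p with h | ⟨h, rfl⟩ | ⟨h, rfl⟩ | ⟨u, q, rfl, rfl⟩
  · rw [S.step_up h, S.step_D]
  · rw [S.step_R h, ← S.L_right v hV h, S.step_L (S.right_ne v h), S.left_right v hV]
  · rw [S.step_L h, ← S.R_left v h, S.step_R (S.left_ne v h), S.right_left v hV]
  · rw [S.step_D, S.ii, S.step_up hV.2.1]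

/-- face step -/
def T (x : Nd P × P) : Nd P × P := (S.step x.1 x.2, S.F x.2)

theorem T_inj {x y : Nd P × P} (hx : S.Valid x.1) (hy : S.Valid y.1) (h : S.T x = S.T y) : x = y := by
  have h1 : x.2 = y.2 := S.F.injective (congrArg Prod.snd h)
  have h2 : S.step x.1 x.2 = S.step y.1 y.2 := congrArg Prod.fst h
  refine Prod.ext ?_ h1
  rw [← S.step_inv x.1 x.2 hx, h2, h1, S.step_inv y.1 y.2 hy]

theorem T_valid (m : ℕ) (x : Nd P × P) (hx : S.Valid x.1) : S.Valid (S.T^[m] x).1 := by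
  induction m with
  | zero => exact hx
  | succ m ih => rw [Function.iterate_succ_apply']; exact S.valid_step _ _ ih

theorem T_climb (u : Nd P) (q : P) (h : S.up u q) (k : ℕ) (hk : k ≤ S.kmax u q) :
    S.T^[k+1] (u, q) = (node u q k, (S.F ^ (k+1)) q) := by
  induction k with
  | zero => simp [T, S.step_up h]
  | succ k ih =>
    rw [Function.iterate_succ_apply', ih (by omega)]
    unfold T
    refine Prod.ext ?_ ?_
    · show S.step (node u q k) (S.R (node u q k)) = _
      rw [S.step_R (by simp)]
      unfold right; rw [if_pos (by omega)]
    · exact S.F_pred _ _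

theorem T_can (u : Nd P) (q : P) (hV : S.Valid u) (h : S.up u q) : S.T^[S.n] (u, q) = (u, q) := by
  have hn := S.hn
  have hF : ∀ q, S.F ((S.F ^ (S.n - 1)) q) = q := by intro q; rw [F_n1]; simp
  by_cases hl : S.last u q
  · have hk : S.kmax u q = S.n - 4 := by simp [kmax, hl]
    have h1 := S.T_climb u q h (S.n - 4) hk.ge
    have e0 : S.right (node u q (S.n - 4)) = node (S.right u) (S.sgi (S.i (S.R u))) 0 := by
      conv_lhs => unfold right
      rw [if_neg (by omega), if_pos hl]
    have h2 : S.T^[S.n - 2] (u, q) = (node (S.right u) (S.sgi (S.i (S.R u))) 0, (S.F ^ (S.n - 2)) q) := by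
      rw [show S.n - 2 = (S.n - 4 + 1) + 1 by omega, Function.iterate_succ_apply', h1]
      refine Prod.ext ?_ (S.F_pred _ _)
      show S.step (node u q (S.n - 4)) (S.R (node u q (S.n - 4))) = _
      rw [S.step_R (by simp), e0]
    have h3 : S.T^[S.n - 1] (u, q) = (S.right u, (S.F ^ (S.n - 1)) q) := by
      rw [show S.n - 1 = (S.n - 2) + 1 by omega, Function.iterate_succ_apply', h2]
      refine Prod.ext ?_ (S.F_pred _ _)
      have : (S.F ^ (S.n - 2)) q = S.i (S.sgi (S.i (S.R u))) := by
        rw [F_n2, hl.2]; simp [sg, sgi, S.ii]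
      simp only [T, this, step_D]
    rw [show S.n = (S.n - 1) + 1 by omega, Function.iterate_succ_apply', h3]
    refine Prod.ext ?_ (hF q)
    have : (S.F ^ (S.n - 1)) q = S.Lf (S.right u) := by
      rw [F_n1, hl.2, S.L_right u hV hl.1]; simp [sg]
    simp only [T, this]
    rw [S.step_L (S.right_ne u hl.1), S.left_right u hV]
  · have hk : S.kmax u q = S.n - 3 := by simp [kmax, hl]
    have h1 := S.T_climb u q h (S.n - 3) hk.ge
    have e0 : S.right (node u q (S.n - 3)) = node u (S.sgi q) 0 := by
      unfold right
      rw [if_neg (by omega), if_neg hl]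
    have h2 : S.T^[S.n - 1] (u, q) = (node u (S.sgi q) 0, (S.F ^ (S.n - 1)) q) := by
      rw [show S.n - 1 = (S.n - 3 + 1) + 1 by omega, Function.iterate_succ_apply', h1]
      refine Prod.ext ?_ (S.F_pred _ _)
      show S.step (node u q (S.n - 3)) (S.R (node u q (S.n - 3))) = _
      rw [S.step_R (by simp), e0]
    rw [show S.n = (S.n - 1) + 1 by omega, Function.iterate_succ_apply', h2]
    refine Prod.ext ?_ (hF q)
    have : (S.F ^ (S.n - 1)) q = S.i (S.sgi q) := by
      rw [F_n1]; simp [sgi, S.ii]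
    simp only [T, this, step_D]

theorem T_back (x : Nd P × P) (hx : S.Valid x.1) (h : S.T^[S.n] (S.T x) = S.T x) :
    S.T^[S.n] x = x := by
  apply S.T_inj (S.T_valid _ x hx) hx
  rw [← Function.iterate_succ_apply' S.T, Function.iterate_succ_apply, h]

theorem T_L (v : Nd P) (hV : S.Valid v) (h : v ≠ root) : S.T^[S.n] (v, S.Lf v) = (v, S.Lf v) := by
  apply S.T_back _ hV
  have : S.T (v, S.Lf v) = (S.left v, S.sg (S.R (S.left v))) := by
    rw [S.R_left v h]; simp [T, S.step_L h, sg, S.ii]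
  rw [this]
  exact S.T_can _ _ (S.valid_left v hV) (S.up_R (S.left_ne v h))

theorem T_all (v : Nd P) (p : P) (hV : S.Valid v) : S.T^[S.n] (v, p) = (v, p) := by
  rcases S.cases_step v p with h | ⟨h, rfl⟩ | ⟨h, rfl⟩ | ⟨u, q, rfl, rfl⟩
  · exact S.T_can v p hV h
  · cases v with
    | root => exact absurd rfl h
    | node u q k =>
      have := S.T_climb u q hV.2.1 k hV.2.2
      show S.T^[S.n] (node u q k, (S.F ^ (k+1)) q) = (node u q k, (S.F ^ (k+1)) q)
      rw [← this, ← Function.iterate_add_apply, add_comm, Function.iterate_add_apply,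
        S.T_can u q hV.1 hV.2.1]
  · exact S.T_L v hV h
  · apply S.T_back _ hV
    have : S.T (node u q 0, S.i q) = (u, S.sg q) := by simp [T, step_D, sg]
    rw [this]
    by_cases hf : S.first u q
    · rw [hf.2]; exact S.T_L u hV.1 hf.1
    · exact S.T_can _ _ hV.1 (S.up_sg hV.2.1 hf)

theorem foldl_T (m : ℕ) (v : Nd P) (p : P) :
    ((List.range m).map (fun j => (S.F ^ j) p)).foldl S.step v = (S.T^[m] (v, p)).1 ∧
    (S.T^[m] (v, p)).2 = (S.F ^ m) p := by
  induction m with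
  | zero => simp
  | succ m ih =>
    rw [List.range_succ, Function.iterate_succ_apply']
    simp only [List.map_append, List.foldl_append, ih.1, List.map_cons, List.map_nil,
      List.foldl_cons, List.foldl_nil]
    refine ⟨by simp only [T, ih.2], ?_⟩
    simp only [T, ih.2]; exact S.F_pred _ _

/-- Never going down. -/
def Inv (m : ℕ) (w : List P) (v : Nd P) : Prop := S.Valid v ∧
  ((∃ u q, v = node u q 0 ∧ w.getLast? = some q) ∨
   (∃ u q k s l, v = node u q (k+1) ∧ s <:+ w ∧ s.length ≤ m ∧ s.length = k+1 ∧
     s.IsChain (fun a b => b = S.F a) ∧ s.getLast? = some l ∧ l = (S.F ^ (k+1)) q) ∨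
   (∃ u q k s l, v = node u q k ∧ s <:+ w ∧ s ≠ [] ∧ s.length ≤ m ∧ S.n - 3 ≤ k + s.length ∧
     s.IsChain (fun a b => b = S.sgi (S.i a)) ∧ s.getLast? = some l ∧ l = S.i (S.R v)))

theorem chain_snoc {α : Type} {r : α → α → Prop} {s : List α} {l p : α} (hs : s.IsChain r)
    (hl : s.getLast? = some l) (h : r l p) : (s ++ [p]).IsChain r := by
  rw [List.isChain_append]
  refine ⟨hs, by simp, ?_⟩
  intro x hx y hy
  simp at hy
  rw [hl] at hx
  simp at hx
  subst hx; subst hy; exact h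

theorem suffix_snoc {α : Type} {s w : List α} (p : α) (h : s <:+ w) : s ++ [p] <:+ w ++ [p] := by
  obtain ⟨t, rfl⟩ := h
  exact ⟨t, by simp⟩

theorem inv_all (m : ℕ) (hm1 : 1 ≤ m) (hm : m + 4 ≤ S.n) (w : List P) (hw : w ≠ [])
    (hred : w.IsChain (fun a b => b ≠ S.i a))
    (hpos : ∀ s, s <:+: w → s.length = m + 1 → ¬ s.IsChain (fun a b => b = S.F a))
    (hneg : ∀ s, s <:+: w → s.length = m + 1 → ¬ s.IsChain (fun a b => b = S.sgi (S.i a))) :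
    S.Inv m w (w.foldl S.step root) := by
  have hn := S.hn
  induction w using List.reverseRecOn with
  | nil => exact absurd rfl hw
  | append_singleton w p ih =>
    rcases eq_or_ne w [] with rfl | hne
    · exact ⟨⟨trivial, trivial, Nat.zero_le _⟩, Or.inl ⟨root, p, rfl, rfl⟩⟩
    have hin : w <:+: w ++ [p] := (List.prefix_append _ _).isInfix
    have hr := (List.isChain_append.1 hred)
    obtain ⟨hV, hI⟩ := ih hne hr.1 (fun s h => hpos s (h.trans hin)) (fun s h => hneg s (h.trans hin))
    have hlast : ∀ l, w.getLast? = some l → p ≠ S.i l := fun l hl =>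
      hr.2.2 l (by simp [hl]) p (by simp)
    have hsuf : ∀ s l, s <:+ w → s.getLast? = some l → w.getLast? = some l := by
      rintro s l ⟨t, rfl⟩ hl
      rw [List.getLast?_append, hl]; rfl
    rw [List.foldl_append]
    simp only [List.foldl_cons, List.foldl_nil]
    generalize hv : w.foldl S.step root = v at *
    refine ⟨S.valid_step _ _ hV, ?_⟩
    rcases S.cases_step v p with h | ⟨h, hp⟩ | ⟨h, hp⟩ | ⟨u', q', hu', hp⟩
    · left
      exact ⟨v, p, S.step_up h, by simp⟩
    · -- right
      subst hp
      rw [S.step_R h]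
      rcases hI with ⟨u, q, rfl, hl⟩ | ⟨u, q, k, s, l, rfl, hs, hsm, hsk, hch, hl, hlq⟩ |
        ⟨u, q, k, s, l, hvq, hs, hs0, hsm, hsk, hch, hl, hlq⟩
      · right; left
        refine ⟨u, q, 0, [S.R (node u q 0)], _, ?_, List.suffix_append _ _, hm1, rfl, by simp, rfl, rfl⟩
        unfold right
        rw [if_pos (by unfold kmax; split_ifs <;> omega)]
      · right; left
        have hc2 := chain_snoc (p := S.R (node u q (k+1))) hch hl (by rw [hlq, F_pred]; rfl)
        have hs2 := suffix_snoc (S.R (node u q (k+1))) hs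
        have hlen : s.length ≠ m := fun e => hpos _ hs2.isInfix (by simp [e]) hc2
        refine ⟨u, q, k+1, _, S.R (node u q (k+1)), ?_, hs2, by simp; omega, by simp; omega, hc2,
          by simp, rfl⟩
        unfold right
        rw [if_pos (by unfold kmax; split_ifs <;> omega)]
      · exact absurd (by rw [hlq, S.ii]) (hlast l (hsuf s l hs hl))
    · -- left
      subst hp
      rw [S.step_L h]
      rcases hI with ⟨u, q, rfl, hl⟩ | ⟨u, q, k, s, l, rfl, hs, hsm, hsk, hch, hl, hlq⟩ |
        ⟨u, q, k, s, l, hvq, hs, hs0, hsm, hsk, hch, hl, hlq⟩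
      · right; right
        have : ∃ u' q' k', S.left (node u q 0) = node u' q' k' ∧ S.n - 4 ≤ k' := by
          conv => enter [1, u', 1, q', 1, k']; unfold left
          split_ifs
          · exact ⟨_, _, _, rfl, le_refl _⟩
          · exact ⟨_, _, _, rfl, by omega⟩
        obtain ⟨u', q', k', e, hk'⟩ := this
        refine ⟨u', q', k', [S.Lf (node u q 0)], _, e, List.suffix_append _ _, by simp, hm1,
          by simp; omega, by simp, rfl, ?_⟩
        rw [S.R_left _ h, S.ii]; rfl
      · exact absurd (by rw [hlq]; rfl) (hlast l (hsuf s l hs hl))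
      · right; right
        obtain ⟨k, rfl⟩ : ∃ k', k = k' + 1 := ⟨k - 1, by omega⟩
        subst hvq
        have hc2 := chain_snoc (p := S.Lf (node u q (k+1))) hch hl
          (by rw [hlq, S.ii, R_succ, sgi_sg])
        have hs2 := suffix_snoc (S.Lf (node u q (k+1))) hs
        have hlen : s.length ≠ m := fun e => hneg _ hs2.isInfix (by simp [e]) hc2
        refine ⟨u, q, k, _, S.Lf (node u q (k+1)), rfl, hs2, by simp, by simp; omega,
          by simp; omega, hc2, by simp, ?_⟩
        rw [S.R_left _ h, S.ii]
    · -- down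
      subst hu'
      exfalso
      rcases hI with ⟨u, q, e, hl⟩ | ⟨u, q, k, s, l, e, hs, hsm, hsk, hch, hl, hlq⟩ |
        ⟨u, q, k, s, l, e, hs, hs0, hsm, hsk, hch, hl, hlq⟩
      · injection e with e1 e2; subst e2; exact hlast _ hl hp
      · injection e with e1 e2 e3; omega
      · injection e with e1 e2 e3; omega

theorem dehn (m : ℕ) (hm1 : 1 ≤ m) (hm : m + 4 ≤ S.n) (w : List P) (hw : w ≠ [])
    (hred : w.IsChain (fun a b => b ≠ S.i a)) (hfix : w.foldl S.step root = root) :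
    ∃ s, s <:+: w ∧ s.length = m + 1 ∧
      (s.IsChain (fun a b => b = S.F a) ∨ s.IsChain (fun a b => b = S.sgi (S.i a))) := by
  by_contra hcon
  push Not at hcon
  have := S.inv_all m hm1 hm w hw hred (fun s h1 h2 => (hcon s h1 h2).1)
    (fun s h1 h2 => (hcon s h1 h2).2)
  rw [hfix] at this
  rcases this.2 with ⟨u, q, e, _⟩ | ⟨u, q, k, s, l, e, _⟩ | ⟨u, q, k, s, l, e, _⟩ <;> cases e

end Sys
end Dehn
/-! ### Concrete system of letters -/

section concrete
variable {g : ℕ}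

def linv (s : Letter g) : Letter g := (s.1, !s.2)

def lnxt (s : Letter g) : Letter g :=
  if h : (s.1 : ℕ) % 2 = 0 then (⟨s.1 + 1, by have := s.1.2; omega⟩, s.2)
  else if s.2 then (⟨s.1 - 1, by have := s.1.2; omega⟩, false)
  else if h : (s.1 : ℕ) + 1 < 2 * g then (⟨s.1 + 1, h⟩, true)
  else (⟨0, by have := s.1.2; omega⟩, true)

def lidx (s : Letter g) : ℕ :=
  if (s.1 : ℕ) % 2 = 0 then (if s.2 then 2 * s.1 else 2 * s.1 + 2)
  else (if s.2 then 2 * s.1 - 1 else 2 * s.1 + 1)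

theorem lidx_lt (s : Letter g) : lidx s < 4 * g := by
  have := s.1.2
  unfold lidx; split_ifs <;> omega

theorem lidx_inj {s t : Letter g} (h : lidx s = lidx t) : s = t := by
  obtain ⟨⟨a, ha⟩, b⟩ := s
  obtain ⟨⟨a', ha'⟩, b'⟩ := t
  cases b <;> cases b' <;> simp [lidx] at h ⊢ <;> split_ifs at h <;> omega

theorem lidx_nxt (s : Letter g) :
    lidx (lnxt s) = if lidx s + 1 = 4 * g then 0 else lidx s + 1 := by
  obtain ⟨⟨a, ha⟩, b⟩ := s
  cases b <;> by_cases h : a % 2 = 0 <;> by_cases h2 : a + 1 < 2 * g <;>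
    simp [lidx, lnxt, h, h2] <;> (try split_ifs) <;> omega

theorem lidx_inv (s : Letter g) :
    lidx (linv s) = if lidx s % 4 < 2 then lidx s + 2 else lidx s - 2 := by
  obtain ⟨⟨a, ha⟩, b⟩ := s
  cases b <;> by_cases h : a % 2 = 0 <;> simp [lidx, linv, h] <;> (try split_ifs) <;> omega

theorem linv_linv (s : Letter g) : linv (linv s) = s := by simp [linv]

theorem lnxt_inj : Function.Injective (lnxt (g := g)) := by
  intro s t h
  have h := congrArg lidx h
  have hs := lidx_lt s
  have ht := lidx_lt t
  rw [lidx_nxt, lidx_nxt] at h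
  apply lidx_inj
  split_ifs at h <;> omega

def lF : Equiv.Perm (Letter g) :=
  Equiv.ofBijective lnxt (Finite.injective_iff_bijective.1 lnxt_inj)

theorem lF_apply (s : Letter g) : lF s = lnxt s := rfl

theorem lidx_pow (k : ℕ) (s : Letter g) : lidx ((lF ^ k) s) = (lidx s + k) % (4 * g) := by
  have hs := lidx_lt s
  induction k with
  | zero => simp [Nat.mod_eq_of_lt hs]
  | succ k ih =>
    rw [pow_succ', Equiv.Perm.mul_apply, lF_apply, lidx_nxt, ih]
    have := Nat.mod_lt (lidx s + k) (show 0 < 4 * g by omega)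
    have h4 : 0 < 4 * g := by omega
    have hd := Nat.div_add_mod (lidx s + k) (4 * g)
    have h1 : lidx s + (k + 1) = ((lidx s + k) % (4 * g) + 1) + 4 * g * ((lidx s + k) / (4 * g)) := by
      omega
    rw [h1, Nat.add_mul_mod_self_left]
    clear h1 hd
    split_ifs with h
    · rw [h, Nat.mod_self]
    · rw [Nat.mod_eq_of_lt (a := _ + 1) (by omega)]

def lSys (g : ℕ) (hg : 2 ≤ g) : Dehn.Sys (Letter g) where
  F := lF
  i := linv
  n := 4 * g
  hn := by omega
  ii := linv_linv
  Fn := by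
    ext1 s
    apply lidx_inj
    rw [lidx_pow]
    simp [Nat.mod_eq_of_lt (lidx_lt s)]
  s1 := by
    intro s h
    have h := congrArg lidx h
    have := lidx_lt s
    rw [lF_apply, lidx_nxt, lidx_inv] at h
    generalize lidx s = x at *
    grind
  s2 := by
    intro s h
    have h := congrArg lidx h
    have := lidx_lt s
    simp only [lF_apply, lidx_nxt, lidx_inv] at h
    generalize lidx s = x at *
    grind
  s3 := by
    intro s h
    have h := congrArg lidx h
    have := lidx_lt s
    simp only [lF_apply, lidx_nxt, lidx_inv] at h
    generalize lidx s = x at *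
    grind

theorem gapN_nxt (s : Letter g) : gapN s (lF s) = 0 := by
  have h : posLv (lF s) = posArr s + 1 ∨ (posLv (lF s) = 0 ∧ posArr s + 1 = 4 * g) := by
    obtain ⟨⟨a, ha⟩, b⟩ := s
    cases b <;> by_cases h : a % 2 = 0 <;> by_cases h2 : a + 1 < 2 * g <;>
      simp [lF_apply, lnxt, h, h2, posLv, posArr, posIn, posOut] <;>
      (try split_ifs) <;> omega
  unfold gapN
  rcases h with h | ⟨h, h'⟩
  · rw [h, Nat.add_sub_cancel_left, Nat.mod_self]
  · rw [h, h']; simp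

theorem relatorWord_length : (relatorWord g).length = 4 * g := by simp [relatorWord]

def s0 (hg : 2 ≤ g) : Letter g := (⟨0, by omega⟩, true)

theorem relatorWord_eq (hg : 2 ≤ g) :
    relatorWord g = (List.range (4 * g)).map (fun j => (lF ^ j) (s0 hg)) := by
  apply List.ext_getElem (by simp [relatorWord])
  intro j h1 h2
  have hj : j < 4 * g := by simpa using h2
  simp only [relatorWord, List.getElem_map, List.getElem_range, List.getElem_finRange]
  apply lidx_inj
  rw [lidx_pow]
  simp only [lidx, s0, relLabel, relSign]
  simp [Nat.mod_eq_of_lt hj]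
  split_ifs <;> omega

theorem rotate_chain (hg : 2 ≤ g) (m : ℕ) :
    ((relatorWord g).rotate m).IsChain (fun a b => b = lF a) := by
  have hF : (lF (g := g)) ^ (4 * g) = 1 := (lSys g hg).Fn
  rw [List.isChain_iff_getElem]
  intro j hj
  simp only [relatorWord_eq hg, List.getElem_rotate, List.getElem_map, List.getElem_range,
    List.length_map, List.length_range]
  rw [← pow_eq_pow_mod _ hF, ← pow_eq_pow_mod _ hF, ← Equiv.Perm.mul_apply, ← pow_succ']
  congr 2; omega

abbrev instInhL (hg : 2 ≤ g) : Inhabited (Letter g) := ⟨s0 hg⟩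

abbrev VT (hg : 2 ≤ g) := {v : Dehn.Nd (Letter g) // @Dehn.Sys.Valid _ (lSys g hg) (instInhL hg) v}

def lp (hg : 2 ≤ g) (s : Letter g) : Equiv.Perm (VT hg) :=
  letI := instInhL hg
  { toFun := fun v => ⟨(lSys g hg).step v.1 s, (lSys g hg).valid_step _ _ v.2⟩
    invFun := fun v => ⟨(lSys g hg).step v.1 (linv s), (lSys g hg).valid_step _ _ v.2⟩
    left_inv := fun v => Subtype.ext ((lSys g hg).step_inv v.1 s v.2)
    right_inv := fun v => Subtype.ext (by
      have := (lSys g hg).step_inv v.1 (linv s) v.2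
      rw [show (lSys g hg).i (linv s) = s from linv_linv s] at this
      exact this) }

theorem lp_inv (hg : 2 ≤ g) (s : Letter g) : lp hg (linv s) = (lp hg s)⁻¹ := by
  ext1 v; rfl

theorem lp_prod (hg : 2 ≤ g) (w : List (Letter g)) (v : VT hg) :
    ((w.map (fun s => MulOpposite.op (lp hg s))).prod.unop v).1 =
      letI := instInhL hg
      w.foldl (lSys g hg).step v.1 := by
  induction w generalizing v with
  | nil => simp
  | cons s w ih =>
    simp only [List.map_cons, List.prod_cons, MulOpposite.unop_mul, MulOpposite.unop_op,
      Equiv.Perm.mul_apply, List.foldl_cons]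
    rw [ih]; rfl

theorem lp_relator (hg : 2 ≤ g) :
    ((relatorWord g).map (fun s => MulOpposite.op (lp hg s))).prod = 1 := by
  letI := instInhL hg
  apply MulOpposite.unop_injective
  ext1 v
  apply Subtype.ext
  rw [lp_prod, relatorWord_eq hg]
  have h1 := ((lSys g hg).foldl_T (4 * g) v.1 (s0 hg)).1
  have h2 := (lSys g hg).T_all v.1 (s0 hg) v.2
  rw [show (lSys g hg).n = 4 * g from rfl] at h2
  rw [h2] at h1
  exact h1

def lhom (hg : 2 ≤ g) : Gamma g →* (Equiv.Perm (VT hg))ᵐᵒᵖ :=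
  PresentedGroup.toGroup (f := fun ℓ => MulOpposite.op (lp hg (ℓ, true))) (by
    intro r hr
    rw [Set.mem_singleton_iff] at hr
    subst hr
    rw [relatorF, map_list_prod, List.map_map, ← lp_relator hg]
    congr 2
    ext1 l
    obtain ⟨a, b⟩ := l
    cases b
    · have := lp_inv hg (a, true)
      simp only [linv, Bool.not_true] at this
      simp [this]
    · simp)

theorem lhom_word (hg : 2 ≤ g) (w : List (Letter g)) :
    lhom hg (wordG w) = (w.map (fun s => MulOpposite.op (lp hg s))).prod := by
  rw [wordG, map_list_prod, List.map_map]
  congr 2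
  ext1 l
  obtain ⟨a, b⟩ := l
  cases b
  · have := lp_inv hg (a, true)
    simp only [linv, Bool.not_true] at this
    simp [this, letterG, lhom]
  · simp [letterG, lhom]

theorem dehn_word (hg : 2 ≤ g) (w : List (Letter g)) (hw : w ≠ [])
    (hred : w.IsChain (fun a b => b ≠ linv a)) (h1 : wordG w = 1) :
    ∃ s, s <:+: w ∧ s.length = 2 * g + 1 ∧
      (s.IsChain (fun a b => b = lF a) ∨ s.IsChain (fun a b => linv a = lF (linv b))) := by
  letI := instInhL hg
  have h2 := lhom_word hg w
  rw [h1, map_one] at h2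
  have h3 := lp_prod hg w ⟨Dehn.Nd.root, trivial⟩
  rw [← h2] at h3
  obtain ⟨s, a, b, c⟩ := (lSys g hg).dehn (2 * g) (by omega) (by show 2 * g + 4 ≤ 4 * g; omega)
    w hw hred h3.symm
  refine ⟨s, a, b, c.imp id fun h => h.imp ?_⟩
  intro x y hxy
  rw [hxy]
  show _ = lF (linv (linv (lF.symm (linv x))))
  rw [linv_linv]; simp

theorem wordG_append (a b : List (Letter g)) : wordG (a ++ b) = wordG a * wordG b := by
  simp [wordG]

theorem wordG_relator : wordG (relatorWord g) = 1 := by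
  have : PresentedGroup.mk ({relatorF g} : Set (FreeGroup (Fin (2 * g)))) (relatorF g) = 1 :=
    PresentedGroup.one_of_mem (by simp)
  rw [← this]
  have h2 : PresentedGroup.mk ({relatorF g} : Set (FreeGroup (Fin (2 * g))))
    ((relatorWord g).map fun l => if l.2 then FreeGroup.of l.1 else (FreeGroup.of l.1)⁻¹).prod
      = PresentedGroup.mk ({relatorF g} : Set (FreeGroup (Fin (2 * g)))) (relatorF g) := rfl
  rw [← h2, wordG, map_list_prod, List.map_map]
  congr 2
  ext1 l
  obtain ⟨a, b⟩ := l
  cases b <;> simp [letterG, PresentedGroup.of]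

theorem wordG_rotate (w : List (Letter g)) (m : ℕ) (h : wordG w = 1) : wordG (w.rotate m) = 1 := by
  rw [List.rotate_eq_drop_append_take_mod, wordG_append]
  apply mul_eq_one_comm.1
  rw [← wordG_append, List.take_append_drop, h]

end concrete
/-! ### Walks and homotopies -/

namespace Complex

section part
variable {g : ℕ} {Y : Complex g}

theorem dHead_rev (d : Y.D) : Y.dHead (Y.dRev d) = Y.dTail d := by
  obtain ⟨e, b⟩ := d; cases b <;> rfl

theorem dTail_rev (d : Y.D) : Y.dTail (Y.dRev d) = Y.dHead d := by
  obtain ⟨e, b⟩ := d; cases b <;> rfl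

theorem dRev_rev (d : Y.D) : Y.dRev (Y.dRev d) = d := by
  obtain ⟨e, b⟩ := d; cases b <;> rfl

theorem dLet_rev (d : Y.D) : Y.dLet (Y.dRev d) = linv (Y.dLet d) := rfl

theorem walk_nil {u v : Y.V} : Y.WalkFrom u v [] ↔ u = v := by
  constructor
  · intro h; cases h; rfl
  · rintro rfl; exact WalkFrom.nil _

theorem walk_cons {u v : Y.V} {d : Y.D} {l : List Y.D} :
    Y.WalkFrom u v (d :: l) ↔ u = Y.dTail d ∧ Y.WalkFrom (Y.dHead d) v l := by
  constructor
  · intro h; cases h with | cons _ h => exact ⟨rfl, h⟩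
  · rintro ⟨rfl, h⟩; exact WalkFrom.cons _ h

theorem walk_append {u v : Y.V} {a b : List Y.D} :
    Y.WalkFrom u v (a ++ b) ↔ ∃ w, Y.WalkFrom u w a ∧ Y.WalkFrom w v b := by
  induction a generalizing u with
  | nil => simp [walk_nil]
  | cons d a ih => simp only [List.cons_append, walk_cons, ih]; grind

theorem revW_append (a b : List Y.D) : Y.revW (a ++ b) = Y.revW b ++ Y.revW a := by
  simp [revW]

theorem revW_cons (d : Y.D) (b : List Y.D) : Y.revW (d :: b) = Y.revW b ++ [Y.dRev d] := by
  simp [revW]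

theorem revW_revW (a : List Y.D) : Y.revW (Y.revW a) = a := by
  simp only [revW, List.map_reverse, List.reverse_reverse, List.map_map]
  convert List.map_id a
  ext1 d; exact dRev_rev d

theorem revW_length (a : List Y.D) : (Y.revW a).length = a.length := by simp [revW]

theorem walk_rev {u v : Y.V} {l : List Y.D} (h : Y.WalkFrom u v l) : Y.WalkFrom v u (Y.revW l) := by
  induction l generalizing u with
  | nil => rw [walk_nil] at h; subst h; exact WalkFrom.nil _
  | cons d l ih =>
    rw [walk_cons] at h
    obtain ⟨rfl, h⟩ := h
    rw [revW_cons, walk_append]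
    refine ⟨_, ih h, ?_⟩
    rw [walk_cons, walk_nil]
    exact ⟨(dTail_rev d).symm, dHead_rev d⟩

theorem walk_adj {u v : Y.V} {l : List Y.D} (h : Y.WalkFrom u v l) : l.IsChain Y.adj := by
  induction l generalizing u with
  | nil => exact List.IsChain.nil
  | cons d l ih =>
    rw [walk_cons] at h
    cases l with
    | nil => exact List.IsChain.singleton _
    | cons e l =>
      refine List.IsChain.cons_cons ?_ (ih h.2)
      exact (walk_cons.1 h.2).1

theorem walk_pull {Z : Complex g} (φ : Hom Y Z) (hi : Function.Injective φ.mV) {u : Y.V} {b : Z.V}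
    {l : List Y.D} (h : Z.WalkFrom (φ.mV u) b (l.map φ.mD)) :
    ∃ v, b = φ.mV v ∧ Y.WalkFrom u v l := by
  induction l generalizing u with
  | nil => exact ⟨u, (walk_nil.1 h).symm, WalkFrom.nil _⟩
  | cons d l ih =>
    rw [List.map_cons, walk_cons] at h
    have ht : Z.dTail (φ.mD d) = φ.mV (Y.dTail d) := by
      obtain ⟨e, b⟩ := d; cases b <;> simp [dTail, Hom.mD, φ.hsrc, φ.hdst]
    have hh : Z.dHead (φ.mD d) = φ.mV (Y.dHead d) := by
      obtain ⟨e, b⟩ := d; cases b <;> simp [dHead, Hom.mD, φ.hsrc, φ.hdst]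
    rw [ht, hh] at h
    obtain ⟨v, hv, hw⟩ := ih h.2
    exact ⟨v, hv, walk_cons.2 ⟨hi h.1, hw⟩⟩

theorem wordOf_map {Z : Complex g} (φ : Hom Y Z) (l : List Y.D) :
    Z.wordOf (l.map φ.mD) = Y.wordOf l := by
  simp only [wordOf, List.map_map]
  congr 1
  ext1 d
  simp [dLet, Hom.mD, φ.hlab]

/-- The facts about tiled surfaces which are used below. -/
def Good (Y : Complex g) : Prop :=
  Y.P1 ∧ ∀ f, (∃ v, Y.WalkFrom v v (Y.bdry f)) ∧ Y.wordOf (Y.bdry f) = relatorWord g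

theorem good_of_tiled (hg : 2 ≤ g) (hY : Y.IsTiledSurface) : Y.Good := by
  obtain ⟨Z, ⟨hP1, hP3, -⟩, φ, hV, hE, hF⟩ := hY
  refine ⟨⟨fun e e' h1 h2 => hE (hP1.1 _ _ ?_ ?_), fun e e' h1 h2 => hE (hP1.2 _ _ ?_ ?_)⟩, fun f => ?_⟩
  · rw [φ.hsrc, φ.hsrc, h1]
  · rw [φ.hlab, φ.hlab, h2]
  · rw [φ.hdst, φ.hdst, h1]
  · rw [φ.hlab, φ.hlab, h2]
  · obtain ⟨⟨v, hv⟩, hw⟩ := hP3.1 (φ.mF f)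
    have hb : Z.bdry (φ.mF f) = (Y.bdry f).map φ.mD := φ.hbdry f
    rw [hb] at hv hw
    rw [wordOf_map] at hw
    refine ⟨?_, hw⟩
    have hl := congrArg List.length hw
    rw [relatorWord_length] at hl
    cases hbd : Y.bdry f with
    | nil => rw [hbd] at hl; simp [wordOf] at hl; omega
    | cons d l =>
      rw [hbd] at hv
      have h0 := (walk_cons.1 hv).1
      have ht : Z.dTail (φ.mD d) = φ.mV (Y.dTail d) := by
        obtain ⟨e, b⟩ := d; cases b <;> simp [dTail, Hom.mD, φ.hsrc, φ.hdst]
      rw [h0, ht] at hv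
      obtain ⟨w, hw, hw'⟩ := walk_pull φ hV hv
      rw [hV hw] at hw'
      exact ⟨_, hw'⟩

theorem det_tail (hY : Y.P1) {d d' : Y.D} (h1 : Y.dTail d = Y.dTail d')
    (h2 : Y.dLet d = Y.dLet d') : d = d' := by
  obtain ⟨e, b⟩ := d
  obtain ⟨e', b'⟩ := d'
  simp only [dLet, Prod.mk.injEq] at h2
  obtain ⟨h2, rfl⟩ := h2
  cases b
  · rw [hY.2 e e' h1 h2]
  · rw [hY.1 e e' h1 h2]

theorem det_head (hY : Y.P1) {d d' : Y.D} (h1 : Y.dHead d = Y.dHead d')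
    (h2 : Y.dLet d = Y.dLet d') : d = d' := by
  obtain ⟨e, b⟩ := d
  obtain ⟨e', b'⟩ := d'
  simp only [dLet, Prod.mk.injEq] at h2
  obtain ⟨h2, rfl⟩ := h2
  cases b
  · rw [hY.1 e e' h1 h2]
  · rw [hY.2 e e' h1 h2]

theorem letterG_linv (s : Letter g) : letterG (linv s) = (letterG s)⁻¹ := by
  obtain ⟨a, b⟩ := s
  cases b <;> simp [letterG, linv]

theorem wordOf_append (a b : List Y.D) : Y.wordOf (a ++ b) = Y.wordOf a ++ Y.wordOf b := by
  simp [wordOf]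

theorem wordG_rev (l : List Y.D) : wordG (Y.wordOf (Y.revW l)) = (wordG (Y.wordOf l))⁻¹ := by
  induction l with
  | nil => simp [wordG, wordOf, revW]
  | cons d l ih =>
    rw [revW_cons, wordOf_append, wordG_append, ih]
    simp [wordG, wordOf, dLet_rev, letterG_linv]

theorem wordG_faceLoop (hY : Y.Good) {b : List Y.D} (h : Y.faceLoop Set.univ b) :
    wordG (Y.wordOf b) = 1 := by
  obtain ⟨f, -, n, h⟩ := h
  have key : wordG (Y.wordOf ((Y.bdry f).rotate n)) = 1 := by
    rw [wordOf, List.map_rotate]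
    apply wordG_rotate
    have := (hY.2 f).2
    rw [wordOf] at this
    rw [this, wordG_relator]
  rcases h with rfl | rfl
  · exact key
  · rw [wordG_rev, key, inv_one]

theorem wordG_move (hY : Y.Good) {a b : List Y.D} (h : Y.elemMove Set.univ Set.univ a b) :
    wordG (Y.wordOf a) = wordG (Y.wordOf b) := by
  rcases h with ⟨l₁, l₂, d, -, rfl, rfl⟩ | ⟨l₁, l₂, b, hb, rfl, rfl⟩
  · simp [wordG, wordOf, dLet_rev, letterG_linv]
  · simp only [wordOf_append, wordG_append, wordG_faceLoop hY hb, mul_one]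

theorem wordG_hom (hY : Y.Good) {u v : Y.V} {a b : List Y.D}
    (h : Y.Homotopic Set.univ Set.univ u v a b) :
    wordG (Y.wordOf a) = wordG (Y.wordOf b) := by
  induction h with
  | rel a b h =>
    rcases h.2.2.2.2 with h | h
    · exact wordG_move hY h
    · exact (wordG_move hY h).symm
  | refl => rfl
  | symm _ _ _ ih => exact ih.symm
  | trans _ _ _ _ _ ih1 ih2 => exact ih1.trans ih2

theorem inSet_univ (l : List Y.D) : Y.InSet Set.univ l := fun _ _ => trivial

theorem move_congr {a b : List Y.D} (x y : List Y.D) (h : Y.elemMove Set.univ Set.univ a b) :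
    Y.elemMove Set.univ Set.univ (x ++ a ++ y) (x ++ b ++ y) := by
  rcases h with ⟨l₁, l₂, d, hd, rfl, rfl⟩ | ⟨l₁, l₂, b, hb, rfl, rfl⟩
  · exact Or.inl ⟨x ++ l₁, l₂ ++ y, d, hd, by simp, by simp⟩
  · exact Or.inr ⟨x ++ l₁, l₂ ++ y, b, hb, by simp, by simp⟩

theorem hom_congr {u v s t : Y.V} {a b : List Y.D} {x y : List Y.D}
    (h : Y.Homotopic Set.univ Set.univ u v a b) (hx : Y.WalkFrom s u x) (hy : Y.WalkFrom v t y) :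
    Y.Homotopic Set.univ Set.univ s t (x ++ a ++ y) (x ++ b ++ y) := by
  induction h with
  | rel a b h =>
    obtain ⟨ha, hb, -, -, h⟩ := h
    refine Relation.EqvGen.rel _ _ ⟨?_, ?_, inSet_univ _, inSet_univ _,
      h.imp (move_congr x y) (move_congr x y)⟩
    · exact walk_append.2 ⟨_, walk_append.2 ⟨_, hx, ha⟩, hy⟩
    · exact walk_append.2 ⟨_, walk_append.2 ⟨_, hx, hb⟩, hy⟩
  | refl => exact Relation.EqvGen.refl _
  | symm _ _ _ ih => exact Relation.EqvGen.symm _ _ ih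
  | trans _ _ _ _ _ ih1 ih2 => exact Relation.EqvGen.trans _ _ _ ih1 ih2

theorem hom_trans {u v : Y.V} {a b c : List Y.D}
    (h : Y.Homotopic Set.univ Set.univ u v a b) (h' : Y.Homotopic Set.univ Set.univ u v b c) :
    Y.Homotopic Set.univ Set.univ u v a c := Relation.EqvGen.trans _ _ _ h h'

theorem hom_symm {u v : Y.V} {a b : List Y.D}
    (h : Y.Homotopic Set.univ Set.univ u v a b) :
    Y.Homotopic Set.univ Set.univ u v b a := Relation.EqvGen.symm _ _ h

theorem hom_face {u : Y.V} {b : List Y.D} (hw : Y.WalkFrom u u b) (h : Y.faceLoop Set.univ b) :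
    Y.Homotopic Set.univ Set.univ u u b [] :=
  Relation.EqvGen.rel _ _ ⟨hw, WalkFrom.nil _, inSet_univ _, inSet_univ _,
    Or.inr (Or.inr ⟨[], [], b, h, by simp, by simp⟩)⟩

theorem hom_back (d : Y.D) :
    Y.Homotopic Set.univ Set.univ (Y.dTail d) (Y.dTail d) [d, Y.dRev d] [] := by
  refine Relation.EqvGen.rel _ _ ⟨?_, WalkFrom.nil _, inSet_univ _, inSet_univ _,
    Or.inr (Or.inl ⟨[], [], d, trivial, by simp, by simp⟩)⟩
  simp [walk_cons, walk_nil, dTail_rev, dHead_rev]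

theorem hom_spur {u w : Y.V} {t : List Y.D} (h : Y.WalkFrom u w t) :
    Y.Homotopic Set.univ Set.univ u u (t ++ Y.revW t) [] := by
  induction t generalizing u with
  | nil => exact Relation.EqvGen.refl _
  | cons d t ih =>
    obtain ⟨rfl, h'⟩ := walk_cons.1 h
    have h1 := hom_congr (ih h') (x := [d]) (y := [Y.dRev d]) (s := Y.dTail d) (t := Y.dTail d)
      (by simp [walk_cons, walk_nil]) (by simp [walk_cons, walk_nil, dTail_rev, dHead_rev])
    rw [revW_cons]
    refine hom_trans ?_ (hom_back d)
    simpa using h1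

/-- Consecutive darts along a face. -/
def Q (Y : Complex g) (a b : Y.D) : Prop := Y.adj a b ∧ Y.dLet b = lF (Y.dLet a)

theorem chain_prefix {α : Type*} {R : α → α → Prop} (hR : ∀ a b c, R a b → R a c → b = c)
    (s r : List α) (a : α) (hs : (a :: s).IsChain R) (hr : (a :: r).IsChain R)
    (hl : s.length ≤ r.length) : s <+: r := by
  induction s generalizing r a with
  | nil => exact List.nil_prefix
  | cons b s ih =>
    cases r with
    | nil => simp at hl
    | cons c r =>
      rw [List.isChain_cons_cons] at hs hr
      obtain rfl := hR _ _ _ hs.1 hr.1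
      rw [List.prefix_cons_inj]
      exact ih _ _ hs.2 hr.2 (by simpa using hl)

theorem not_chain {α : Type*} {R : α → α → Prop} (l : List α) (h : ¬ l.IsChain R) :
    ∃ x a b y, l = x ++ a :: b :: y ∧ ¬ R a b := by
  induction l with
  | nil => exact absurd List.IsChain.nil h
  | cons a l ih =>
    cases l with
    | nil => exact absurd (List.IsChain.singleton _) h
    | cons b l =>
      by_cases hab : R a b
      · obtain ⟨x, c, d, y, h1, h2⟩ := ih (fun h' => h (List.IsChain.cons_cons hab h'))
        exact ⟨a :: x, c, d, y, by rw [h1]; rfl, h2⟩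
      · exact ⟨[], a, b, l, rfl, hab⟩

theorem bdry_length (hY : Y.Good) (f : Y.F) : (Y.bdry f).length = 4 * g := by
  have := congrArg List.length (hY.2 f).2
  rwa [relatorWord_length, wordOf, List.length_map] at this

theorem rot_walk (hY : Y.Good) (f : Y.F) (n : ℕ) :
    ∃ v, Y.WalkFrom v v ((Y.bdry f).rotate n) := by
  obtain ⟨v, hv⟩ := (hY.2 f).1
  rw [List.rotate_eq_drop_append_take_mod]
  rw [← List.take_append_drop (n % (Y.bdry f).length) (Y.bdry f), walk_append] at hv
  obtain ⟨w, h1, h2⟩ := hv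
  exact ⟨w, walk_append.2 ⟨v, h2, h1⟩⟩

theorem rot_chain (hg : 2 ≤ g) (hY : Y.Good) (f : Y.F) (n : ℕ) :
    ((Y.bdry f).rotate n).IsChain Y.Q := by
  obtain ⟨v, hv⟩ := rot_walk hY f n
  have h1 := walk_adj hv
  have h2 := rotate_chain hg n
  rw [← (hY.2 f).2, wordOf, ← List.map_rotate, List.isChain_map] at h2
  rw [List.isChain_iff_getElem] at *
  exact fun i hi => ⟨h1 i hi, h2 i hi⟩

theorem Q_det (hY : Y.Good) (a b c : Y.D) (h1 : Y.Q a b) (h2 : Y.Q a c) : b = c :=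
  det_tail hY.1 (h1.1.symm.trans h2.1) (h1.2.trans h2.2.symm)

theorem Q_pred (hg : 2 ≤ g) (hY : Y.Good) {f : Y.F} {a d : Y.D} (h : Y.Q a d)
    (hd : d ∈ Y.bdry f) : a ∈ Y.bdry f := by
  obtain ⟨j, hj, rfl⟩ := List.getElem_of_mem hd
  have hl := bdry_length hY f
  have h1 := rot_chain hg hY f (j + 4 * g - 1)
  rw [List.isChain_iff_getElem] at h1
  have h2 := h1 0 (by rw [List.length_rotate, hl]; omega)
  have h3 : ((Y.bdry f).rotate (j + 4 * g - 1))[0 + 1]'(by rw [List.length_rotate, hl]; omega)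
      = (Y.bdry f)[j] := by
    rw [List.getElem_rotate]
    congr 1
    rw [hl, show 0 + 1 + (j + 4 * g - 1) = j + 4 * g by omega, Nat.add_mod_right,
      Nat.mod_eq_of_lt (by omega)]
  rw [h3] at h2
  have : a = ((Y.bdry f).rotate (j + 4 * g - 1))[0]'(by rw [List.length_rotate, hl]; omega) :=
    det_head hY.1 (h.1.trans h2.1.symm) (lF.injective (h.2.symm.trans h2.2))
  rw [this]
  exact List.mem_rotate.1 (List.getElem_mem _)

theorem Q_head (hg : 2 ≤ g) (hY : Y.Good) {f : Y.F} {d : Y.D} (hd : d ∈ Y.bdry f)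
    (l : List Y.D) (a : Y.D) (h : (a :: l).IsChain Y.Q) (hdl : d ∈ a :: l) : a ∈ Y.bdry f := by
  induction l generalizing a with
  | nil => rw [List.mem_singleton] at hdl; rwa [← hdl]
  | cons b l ih =>
    rw [List.isChain_cons_cons] at h
    rcases List.mem_cons.1 hdl with rfl | h'
    · exact hd
    · exact Q_pred hg hY h.1 (ih b h.2 h')

theorem block_face (hg : 2 ≤ g) (hY : Y.Good) (hbr : Y.BoundaryReduced Set.univ Set.univ)
    {s : List Y.D} (hs : s.length = 2 * g + 1) (hQ : s.IsChain Y.Q) :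
    ∃ f n t, (Y.bdry f).rotate n = s ++ t ∧ t.length < s.length := by
  have hne : s ≠ [] := by rintro rfl; simp at hs
  have h1 : ∃ d ∈ s, ∃ f, d ∈ Y.bdry f := by
    by_contra hcon
    push Not at hcon
    refine hbr.1 s ⟨hne, inSet_univ _, ?_⟩ ⟨⟨hne, by omega, ?_⟩, by omega⟩
    · show List.IsChain _ s
      rw [List.isChain_iff_getElem] at hQ ⊢
      intro i hi
      refine ⟨trivial, ⟨trivial, (hQ i hi).1, fun d _ _ => ?_⟩, ?_⟩
      · rw [(hQ i hi).2, gapN_nxt]; exact Nat.zero_le _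
      · rintro ⟨f, -, hf⟩
        have := hf.subset (List.mem_cons_self ..)
        rw [List.mem_append, or_self] at this
        exact hcon _ (List.getElem_mem _) f this
    · show List.IsChain _ s
      refine hQ.imp fun a b h => ⟨h.1, ?_⟩
      rw [h.2, gapN_nxt]
  obtain ⟨d, hd, f, hf⟩ := h1
  cases s with
  | nil => exact absurd rfl hne
  | cons a s =>
    have ha := Q_head hg hY hf s a hQ hd
    obtain ⟨p, q, hpq⟩ := List.append_of_mem ha
    have hrot : (Y.bdry f).rotate p.length = a :: (q ++ p) := by
      rw [hpq, List.rotate_append_length_eq]; rfl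
    have hl := bdry_length hY f
    rw [hpq] at hl
    simp only [List.length_append, List.length_cons] at hl hs
    have hc := rot_chain hg hY f p.length
    rw [hrot] at hc
    obtain ⟨t, ht⟩ := chain_prefix (Q_det hY) s (q ++ p) a hQ hc (by simp; omega)
    refine ⟨f, p.length, t, by rw [hrot, ← ht]; rfl, ?_⟩
    have := congrArg List.length ht
    simp only [List.length_append, List.length_cons] at this ⊢
    omega

theorem walk_start {u v u' v' : Y.V} {l : List Y.D} (hl : l ≠ []) (h : Y.WalkFrom u v l)
    (h' : Y.WalkFrom u' v' l) : u = u' ∧ v = v' := by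
  induction l generalizing u u' with
  | nil => exact absurd rfl hl
  | cons d l ih =>
    rw [walk_cons] at h h'
    refine ⟨h.1.trans h'.1.symm, ?_⟩
    cases l with
    | nil => exact (walk_nil.1 h.2).symm.trans (walk_nil.1 h'.2)
    | cons e l => exact (ih (by simp) h.2 h'.2).2

/-- A positive block of length `2g+1` is closed up by a shorter path to a face loop. -/
theorem block_loop (hg : 2 ≤ g) (hY : Y.Good) (hbr : Y.BoundaryReduced Set.univ Set.univ)
    {s : List Y.D} {p q : Y.V} (hs : s.length = 2 * g + 1) (hw : Y.WalkFrom p q s)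
    (hQ : s.IsChain Y.Q) :
    ∃ t, Y.WalkFrom q p t ∧ t.length < s.length ∧
      Y.Homotopic Set.univ Set.univ p p (s ++ t) [] := by
  obtain ⟨f, n, t, h1, h2⟩ := block_face hg hY hbr hs hQ
  have hne : s ≠ [] := by rintro rfl; simp at hs
  obtain ⟨v, hv⟩ := rot_walk hY f n
  rw [h1] at hv
  obtain ⟨w, h3, h4⟩ := walk_append.1 hv
  obtain ⟨rfl, rfl⟩ := walk_start hne hw h3
  exact ⟨t, h4, h2, hom_face hv ⟨f, trivial, n, Or.inl h1.symm⟩⟩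

theorem null_hom (hg : 2 ≤ g) (hY : Y.Good) (hbr : Y.BoundaryReduced Set.univ Set.univ)
    (n : ℕ) : ∀ (c : List Y.D) (u : Y.V), c.length = n → Y.WalkFrom u u c →
      wordG (Y.wordOf c) = 1 → Y.Homotopic Set.univ Set.univ u u c [] := by
  induction n using Nat.strong_induction_on with
  | _ n IH =>
  intro c u hn hw h1
  -- reduction step
  have red : ∀ x s y p q s2, c = x ++ s ++ y → Y.WalkFrom u p x → Y.WalkFrom q u y →
      Y.WalkFrom p q s2 → s2.length < s.length → Y.Homotopic Set.univ Set.univ p q s s2 →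
      Y.Homotopic Set.univ Set.univ u u c [] := by
    intro x s y p q s2 hc hx hy hs2 hl hh
    have h2 := hom_congr hh hx hy
    rw [← hc] at h2
    refine hom_trans h2 (IH _ ?_ _ u rfl ?_ ?_)
    · rw [← hn, hc]; simp only [List.length_append]; omega
    · exact walk_append.2 ⟨_, walk_append.2 ⟨_, hx, hs2⟩, hy⟩
    · rw [← wordG_hom hY h2, h1]
  by_cases hc0 : c = []
  · rw [hc0]; exact Relation.EqvGen.refl _
  by_cases hchain : c.IsChain (fun a b => Y.dLet b ≠ linv (Y.dLet a))
  · obtain ⟨s, hs, hsl, hsc⟩ := dehn_word hg (Y.wordOf c) (by simpa [wordOf] using hc0)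
      (by rw [wordOf, List.isChain_map]; exact hchain) h1
    obtain ⟨x', y', hxy⟩ := hs
    obtain ⟨xs, y, rfl, hxs, hy⟩ := List.map_eq_append_iff.1 hxy.symm
    obtain ⟨x, s', rfl, hx, hs'⟩ := List.map_eq_append_iff.1 hxs
    obtain ⟨q, hwq, hwy⟩ := walk_append.1 hw
    obtain ⟨p, hwx, hws⟩ := walk_append.1 hwq
    have hlen : s'.length = 2 * g + 1 := by rw [← hsl, ← hs', List.length_map]
    have hadj := walk_adj hws
    rw [← hs', List.isChain_map, List.isChain_map] at hsc
    rcases hsc with hsc | hsc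
    · have hQ : s'.IsChain Y.Q := by
        rw [List.isChain_iff_getElem] at *
        exact fun i hi => ⟨hadj i hi, hsc i hi⟩
      obtain ⟨t, ht, htl, hh⟩ := block_loop hg hY hbr hlen hws hQ
      refine red x s' y p q (Y.revW t) rfl hwx hwy (walk_rev ht) (by rwa [revW_length]) ?_
      have e1 := hom_congr (hom_spur ht) hws (WalkFrom.nil q)
      have e2 := hom_congr hh (WalkFrom.nil p) (walk_rev ht)
      simp only [List.append_nil, List.nil_append] at e1 e2
      rw [List.append_assoc] at e2
      exact hom_trans (hom_symm e1) e2
    · have hQ : (Y.revW s').IsChain Y.Q := by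
        rw [revW, List.isChain_reverse, List.isChain_map]
        rw [List.isChain_iff_getElem] at *
        intro i hi
        refine ⟨?_, hsc i hi⟩
        show Y.dHead _ = Y.dTail _
        rw [dHead_rev, dTail_rev]
        exact (hadj i hi).symm
      obtain ⟨t, ht, htl, hh⟩ := block_loop hg hY hbr (by rwa [revW_length]) (walk_rev hws) hQ
      rw [revW_length] at htl
      refine red x s' y p q t rfl hwx hwy ht htl ?_
      have e1 := hom_congr hh hws (WalkFrom.nil q)
      have e2 := hom_congr (hom_spur hws) (WalkFrom.nil p) ht
      simp only [List.append_nil, List.nil_append] at e1 e2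
      rw [List.append_assoc] at e2
      exact hom_trans (hom_symm e1) e2
  · obtain ⟨x, a, b, y, hc, hab⟩ := not_chain c hchain
    rw [not_not] at hab
    have hw' := hw
    rw [hc] at hw'
    obtain ⟨p, hx, h2⟩ := walk_append.1 hw'
    rw [walk_cons, walk_cons] at h2
    obtain ⟨rfl, h3, h4⟩ := h2
    have hb : b = Y.dRev a := det_tail hY.1 (by rw [dTail_rev, h3]) hab
    subst hb
    rw [dHead_rev] at h4
    exact red x [a, Y.dRev a] y _ _ [] (by simp [hc]) hx h4 (WalkFrom.nil _) (by simp) (hom_back a)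

end part

end Complex

/-- Every morphism `φ : Y → Z` of tiled surfaces with `Y`
boundary reduced is `π₁`-injective: the induced map of edge-path groups (at any
basepoint `v`) is injective. -/
theorem statement_8 (g : ℕ) (hg : 2 ≤ g) (Y Z : Complex g)
    (hY : Y.IsTiledSurface) (hZ : Z.IsTiledSurface)
    (hbr : Y.BoundaryReduced Set.univ Set.univ) (φ : Hom Y Z) (v : Y.V)
    (c₁ c₂ : List Y.D) (h₁ : Y.WalkFrom v v c₁) (h₂ : Y.WalkFrom v v c₂)
    (h : Z.Homotopic Set.univ Set.univ (φ.mV v) (φ.mV v)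
      (c₁.map φ.mD) (c₂.map φ.mD)) :
    Y.Homotopic Set.univ Set.univ v v c₁ c₂ := by
  have hYg := Complex.good_of_tiled hg hY
  have hw := Complex.wordG_hom (Complex.good_of_tiled hg hZ) h
  rw [Complex.wordOf_map, Complex.wordOf_map] at hw
  have h₃ := Complex.walk_rev h₂
  have hn := Complex.null_hom hg hYg hbr _ (c₁ ++ Y.revW c₂) v rfl
    (Complex.walk_append.2 ⟨v, h₁, h₃⟩)
    (by rw [Complex.wordOf_append, wordG_append, Complex.wordG_rev, hw, mul_inv_cancel])
  have e1 := Complex.hom_congr (Complex.hom_spur h₃) h₁ (Complex.WalkFrom.nil v)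
  have e2 := Complex.hom_congr hn (Complex.WalkFrom.nil v) h₂
  rw [Complex.revW_revW] at e1
  simp only [List.append_nil, List.nil_append] at e1 e2
  rw [List.append_assoc] at e2
  exact Complex.hom_trans (Complex.hom_symm e1) e2

end CS

end
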